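/- Assume 𝕜 is a principal ideal domain of characteristic 0 and let e := e_0 + e_1 + ⋯ + e_{ℓ−1} ∈ Z, so that eZe = Z̄ is the zigzag algebra and e is e-admissible for the standard basis of Z (for every standard basis element b, ebe = b or ebe = 0, so that ξ^e·T^Z_𝔷(n,d)·ξ^e = T^{Z̄}_{𝔷̄}(n,d) with 𝔷̄ := e𝔷e). Then: (1) e is a double centralizer idempotent for Z, i.e. left multiplication gives an algebra isomorphism Z ≅ End_{eZe}(Ze); and (2) if d ≤ n, then ξ^e is a double centralizer idempotent for T^Z_𝔷(n,d), i.e. left multiplication gives an algebra isomorphism T^Z_𝔷(n,d) ≅ End_{T^{Z̄}_{𝔷̄}(n,d)}(T^Z_𝔷(n,d)·ξ^e). -/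

import Mathlib

open Finset

open scoped Classical TensorProduct

noncomputable section

namespace GS

/-- A *good pair* `(A, 𝔞)`: a `𝕜`-superalgebra `A = ev ⊕ od` which is free as a
`𝕜`-supermodule, together with a subalgebra `𝔞 = aa ⊆ A₀` such that `𝔞` and `A/𝔞` are free,
a complement `𝔠 = cc` of `𝔞` in `A₀`, and an `(A,𝔞)`-basis `B = B_𝔞 ⊔ B_𝔠 ⊔ B_1`
(encoded by `bas : Basis β 𝕜 A` with the partition `part : β → Fin 3`,
where `0` = `B_𝔞`, `1` = `B_𝔠`, `2` = `B_1`). -/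
structure GoodPair (𝕜 A β : Type) [CommRing 𝕜] [NonUnitalRing A] [Module 𝕜 A] : Type where
  ev : Submodule 𝕜 A
  od : Submodule 𝕜 A
  compl : IsCompl ev od
  mul_ee : ∀ a ∈ ev, ∀ b ∈ ev, a * b ∈ ev
  mul_eo : ∀ a ∈ ev, ∀ b ∈ od, a * b ∈ od
  mul_oe : ∀ a ∈ od, ∀ b ∈ ev, a * b ∈ od
  mul_oo : ∀ a ∈ od, ∀ b ∈ od, a * b ∈ ev
  free_ev : Module.Free 𝕜 ev
  free_od : Module.Free 𝕜 od
  aa : Submodule 𝕜 A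
  aa_le_ev : aa ≤ ev
  aa_mul : ∀ a ∈ aa, ∀ b ∈ aa, a * b ∈ aa
  free_aa : Module.Free 𝕜 aa
  free_quot : Module.Free 𝕜 (A ⧸ aa)
  cc : Submodule 𝕜 A
  aa_inf_cc : aa ⊓ cc = ⊥
  aa_sup_cc : aa ⊔ cc = ev
  bas : Module.Basis β 𝕜 A
  part : β → Fin 3
  bas_mem_aa : ∀ i, part i = 0 → bas i ∈ aa
  bas_mem_cc : ∀ i, part i = 1 → bas i ∈ cc
  bas_mem_od : ∀ i, part i = 2 → bas i ∈ od

variable {𝕜 A β : Type} [CommRing 𝕜] [NonUnitalRing A] [Module 𝕜 A]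

/-- An element is homogeneous if it lies in the even or the odd part. -/
def Homog (P : GoodPair 𝕜 A β) (a : A) : Prop := a ∈ P.ev ∨ a ∈ P.od

/-- `H`, the set of nonzero homogeneous elements of `A`. -/
def Hset (P : GoodPair 𝕜 A β) : Set A := {a | Homog P a ∧ a ≠ 0}

/-- `⟨𝐚,𝐜⟩ = #{(k,l) : k > l, a_k odd, c_l odd}` (the Koszul sign count). -/
def koz (od : Submodule 𝕜 A) {d : ℕ} (a c : Fin d → A) : ℕ :=
  (univ.filter fun kl : Fin d × Fin d => kl.2 < kl.1 ∧ a kl.1 ∈ od ∧ c kl.2 ∈ od).card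

/-- `⟨σ;𝐚⟩ = #{(k,l) : k < l, σ⁻¹k > σ⁻¹l, a_k and a_l odd}`. -/
def sgnc (od : Submodule 𝕜 A) {d : ℕ} (σ : Equiv.Perm (Fin d)) (a : Fin d → A) : ℕ :=
  (univ.filter fun kl : Fin d × Fin d =>
    kl.1 < kl.2 ∧ σ⁻¹ kl.2 < σ⁻¹ kl.1 ∧ a kl.1 ∈ od ∧ a kl.2 ∈ od).card

/-- `⟨𝐚,𝐫,𝐬⟩ = #{(k,l) : k < l, a_k, a_l odd, (a_k,r_k,s_k) > (a_l,r_l,s_l)}` with respect to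
the fixed total order `ord` on `A × [1,n] × [1,n]`. -/
def ang {n : ℕ} (od : Submodule 𝕜 A) (ord : LinearOrder (A × Fin n × Fin n))
    {d : ℕ} (a : Fin d → A) (r s : Fin d → Fin n) : ℕ :=
  (univ.filter fun kl : Fin d × Fin d =>
    kl.1 < kl.2 ∧ a kl.1 ∈ od ∧ a kl.2 ∈ od ∧
      ord.lt (a kl.2, r kl.2, s kl.2) (a kl.1, r kl.1, s kl.1)).card

/-- `(𝐚,𝐫,𝐬) ∈ Tri^H(n,d)`: all entries are nonzero homogeneous, and a repeated entry
triple forces evenness. -/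
def IsTriH (P : GoodPair 𝕜 A β) {n d : ℕ} (a : Fin d → A) (r s : Fin d → Fin n) : Prop :=
  (∀ k, a k ∈ Hset P) ∧
    ∀ k l : Fin d, k ≠ l → (a k, r k, s k) = (a l, r l, s l) → a k ∈ P.ev

/-- `(𝐛,𝐫,𝐬) ∈ Tri^B(n,d)` for words of basis elements. -/
def IsTriB (P : GoodPair 𝕜 A β) {n d : ℕ} (b : Fin d → β) (r s : Fin d → Fin n) : Prop :=
  ∀ k l : Fin d, k ≠ l → ((b k, r k, s k) : β × Fin n × Fin n) = (b l, r l, s l) →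
    P.part (b k) ≠ 2

/-- Minimal length representatives of the cosets `(S_e × S_f)\S_{e+f}`. -/
def IsShuffle (e f : ℕ) (σ : Equiv.Perm (Fin (e + f))) : Prop :=
  (∀ k l : Fin (e + f), k < l → (l : ℕ) < e → σ⁻¹ k < σ⁻¹ l) ∧
  (∀ k l : Fin (e + f), k < l → e ≤ (k : ℕ) → σ⁻¹ k < σ⁻¹ l)

/-- The tower of superalgebras `M_n(A)^{⊗d}`, `d ≥ 0`, axiomatised.  `X a r s` is the pure
tensor `ξ^{a_1}_{r_1,s_1} ⊗ ⋯ ⊗ ξ^{a_d}_{r_d,s_d}` of matrix units; it is multilinear in the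
`A`-entries, the pure tensors of basis elements form a basis, multiplication is the sign-twisted
(Koszul) componentwise one, `act` is the right action of the symmetric groups by superalgebra
automorphisms, `evT/odT` is the induced supermodule structure, `star` is the `*`-(shuffle)
product and `nab` gives the components of the deconcatenation coproduct `∇`. -/
structure Tower (𝕜 A β : Type) [CommRing 𝕜] [NonUnitalRing A] [Module 𝕜 A]
    (n : ℕ) (T : ℕ → Type) [∀ e, NonUnitalRing (T e)] [∀ e, Module 𝕜 (T e)]
    (P : GoodPair 𝕜 A β) : Type where
  X : ∀ {e : ℕ}, (Fin e → A) → (Fin e → Fin n) → (Fin e → Fin n) → T e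
  X_update_add : ∀ {e : ℕ} (a : Fin e → A) (r s : Fin e → Fin n) (k : Fin e) (x y : A),
    X (Function.update a k (x + y)) r s
      = X (Function.update a k x) r s + X (Function.update a k y) r s
  X_update_smul : ∀ {e : ℕ} (a : Fin e → A) (r s : Fin e → Fin n) (k : Fin e) (c : 𝕜) (x : A),
    X (Function.update a k (c • x)) r s = c • X (Function.update a k x) r s
  bas : ∀ e : ℕ, Module.Basis ((Fin e → β) × (Fin e → Fin n) × (Fin e → Fin n)) 𝕜 (T e)
  bas_eq : ∀ (e : ℕ) (b : Fin e → β) (r s : Fin e → Fin n),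
    bas e (b, r, s) = X (fun k => P.bas (b k)) r s
  X_mul : ∀ {e : ℕ} (a c : Fin e → A) (r s t u : Fin e → Fin n),
    (∀ k, Homog P (a k)) → (∀ k, Homog P (c k)) →
    X a r s * X c t u
      = if s = t then ((-1 : ℤ) ^ koz P.od a c) • X (fun k => a k * c k) r u else 0
  act : ∀ {e : ℕ}, Equiv.Perm (Fin e) → T e →ₗ[𝕜] T e
  act_act : ∀ {e : ℕ} (σ τ : Equiv.Perm (Fin e)) (x : T e), act τ (act σ x) = act (σ * τ) x
  act_mul : ∀ {e : ℕ} (σ : Equiv.Perm (Fin e)) (x y : T e), act σ (x * y) = act σ x * act σ y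
  act_X : ∀ {e : ℕ} (σ : Equiv.Perm (Fin e)) (a : Fin e → A) (r s : Fin e → Fin n),
    (∀ k, Homog P (a k)) →
    act σ (X a r s) = ((-1 : ℤ) ^ sgnc P.od σ a) • X (a ∘ σ) (r ∘ σ) (s ∘ σ)
  evT : ∀ e : ℕ, Submodule 𝕜 (T e)
  odT : ∀ e : ℕ, Submodule 𝕜 (T e)
  complT : ∀ e : ℕ, IsCompl (evT e) (odT e)
  X_mem_evT : ∀ {e : ℕ} (a : Fin e → A) (r s : Fin e → Fin n), (∀ k, Homog P (a k)) →
    Even (univ.filter fun k => a k ∈ P.od).card → X a r s ∈ evT e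
  X_mem_odT : ∀ {e : ℕ} (a : Fin e → A) (r s : Fin e → Fin n), (∀ k, Homog P (a k)) →
    ¬ Even (univ.filter fun k => a k ∈ P.od).card → X a r s ∈ odT e
  star : ∀ {e f : ℕ}, T e →ₗ[𝕜] T f →ₗ[𝕜] T (e + f)
  star_X : ∀ {e f : ℕ} (a : Fin e → A) (r s : Fin e → Fin n)
      (c : Fin f → A) (t u : Fin f → Fin n),
    star (X a r s) (X c t u)
      = ∑ σ ∈ univ.filter (IsShuffle e f),
          act σ (X (Fin.append a c) (Fin.append r t) (Fin.append s u))
  nab : ∀ e f : ℕ, T (e + f) →ₗ[𝕜] TensorProduct 𝕜 (T e) (T f)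
  nab_X : ∀ (e f : ℕ) (a : Fin (e + f) → A) (r s : Fin (e + f) → Fin n),
    nab e f (X a r s)
      = (X (a ∘ Fin.castAdd f) (r ∘ Fin.castAdd f) (s ∘ Fin.castAdd f))
          ⊗ₜ[𝕜] (X (a ∘ Fin.natAdd e) (r ∘ Fin.natAdd e) (s ∘ Fin.natAdd e))

variable {n : ℕ} {T : ℕ → Type} [∀ e, NonUnitalRing (T e)] [∀ e, Module 𝕜 (T e)]

/-- `ξ^𝐚_{𝐫,𝐬}`, the signed sum of the pure tensors over the `S_d`-orbit of `(𝐚,𝐫,𝐬)`. -/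
def xiH {P : GoodPair 𝕜 A β} (D : Tower 𝕜 A β n T P) (ord : LinearOrder (A × Fin n × Fin n))
    {d : ℕ} (a : Fin d → A) (r s : Fin d → Fin n) : T d :=
  ∑ w ∈ (univ.image fun σ : Equiv.Perm (Fin d) => (a ∘ σ, r ∘ σ, s ∘ σ)),
    ((-1 : ℤ) ^ (ang P.od ord a r s + ang P.od ord w.1 w.2.1 w.2.2)) • D.X w.1 w.2.1 w.2.2

/-- `ξ^𝐛_{𝐫,𝐬}` for a word `𝐛` of basis elements. -/
def xiB {P : GoodPair 𝕜 A β} (D : Tower 𝕜 A β n T P) (ord : LinearOrder (A × Fin n × Fin n))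
    {d : ℕ} (b : Fin d → β) (r s : Fin d → Fin n) : T d :=
  xiH D ord (fun k => P.bas (b k)) r s

/-- `[𝐛,𝐫,𝐬]^b_{r,s}`, the multiplicity of an entry triple in a word triple. -/
def mco {n d : ℕ} (b : Fin d → β) (r s : Fin d → Fin n) (w : β × Fin n × Fin n) : ℕ :=
  (univ.filter fun k => ((b k, r k, s k) : β × Fin n × Fin n) = w).card

/-- `∏ ([𝐛,𝐫,𝐬]^b_{r,s})!` over the entry triples whose basis element satisfies `sel`
(e.g. `sel i = (part i = 1)` gives `[𝐛,𝐫,𝐬]^!_𝔠`). -/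
def facSel (sel : β → Prop) {n d : ℕ} (b : Fin d → β) (r s : Fin d → Fin n) : ℕ :=
  ∏ w ∈ ((univ.image fun k => ((b k, r k, s k) : β × Fin n × Fin n)).filter fun w => sel w.1),
    Nat.factorial (mco b r s w)

/-- `η^𝐛_{𝐫,𝐬} := [𝐛,𝐫,𝐬]^!_𝔠 • ξ^𝐛_{𝐫,𝐬}`. -/
def eta {P : GoodPair 𝕜 A β} (D : Tower 𝕜 A β n T P) (ord : LinearOrder (A × Fin n × Fin n))
    {d : ℕ} (b : Fin d → β) (r s : Fin d → Fin n) : T d :=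
  facSel (fun i => P.part i = 1) b r s • xiB D ord b r s

/-- `S^A(n,d) = (M_n(A)^{⊗d})^{S_d}`, the invariants. -/
def SchurS {P : GoodPair 𝕜 A β} (D : Tower 𝕜 A β n T P) (d : ℕ) : Submodule 𝕜 (T d) where
  carrier := {x | ∀ σ : Equiv.Perm (Fin d), D.act σ x = x}
  add_mem' := by
    intro x y hx hy σ
    rw [map_add, hx σ, hy σ]
  zero_mem' := by
    intro σ; exact map_zero _
  smul_mem' := by
    intro c x hx σ
    rw [map_smul, hx σ]

/-- The generalized Schur algebra `T^A_𝔞(n,d)`, the `𝕜`-span of the `η^𝐛_{𝐫,𝐬}`,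
`(𝐛,𝐫,𝐬) ∈ Tri^B(n,d)`. -/
def SchurT {P : GoodPair 𝕜 A β} (D : Tower 𝕜 A β n T P) (ord : LinearOrder (A × Fin n × Fin n))
    (d : ℕ) : Submodule 𝕜 (T d) :=
  Submodule.span 𝕜 {x | ∃ b r s, IsTriB P b r s ∧ x = eta D ord b r s}

/-- `S^𝔞(n,d) = (M_n(𝔞)^{⊗d})^{S_d} ⊆ S^A(n,d)`. -/
def SchurA {P : GoodPair 𝕜 A β} (D : Tower 𝕜 A β n T P) (d : ℕ) : Submodule 𝕜 (T d) :=
  Submodule.span 𝕜 {x | ∃ a r s, (∀ k, a k ∈ P.aa) ∧ x = D.X a r s} ⊓ SchurS D d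

/-- `ξ^f = E^f ⊗ ⋯ ⊗ E^f` for `f ∈ A`. -/
def xiIdem {P : GoodPair 𝕜 A β} (D : Tower 𝕜 A β n T P) (f : A) (d : ℕ) : T d :=
  ∑ r : Fin d → Fin n, D.X (fun _ => f) r r

/-- Transport along an equality of degrees. -/
def tcast {e f : ℕ} (h : e = f) : T e ≃ₗ[𝕜] T f := by
  subst h; exact LinearEquiv.refl 𝕜 (T e)

/-- Iterated `*`-product `x_1 * x_2 * ⋯ * x_d` of degree-one pure tensors read off from a
word (associated to the left). -/
def starIter {P : GoodPair 𝕜 A β} (D : Tower 𝕜 A β n T P) :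
    ∀ (e : ℕ), (Fin e → A) → (Fin e → Fin n) → (Fin e → Fin n) → T e
  | 0, _, _, _ => D.X Fin.elim0 Fin.elim0 Fin.elim0
  | (e + 1), a, r, s =>
      D.star (starIter D e (a ∘ Fin.castSucc) (r ∘ Fin.castSucc) (s ∘ Fin.castSucc))
        (D.X (fun _ : Fin 1 => a (Fin.last e)) (fun _ => r (Fin.last e)) (fun _ => s (Fin.last e)))

/-- Iterated `*`-product of blockwise given elements. -/
def starBlocks {P : GoodPair 𝕜 A β} (D : Tower 𝕜 A β n T P) :
    ∀ (q : ℕ) (sz : Fin q → ℕ), (∀ m, T (sz m)) → T (∑ m, sz m)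
  | 0, sz, _ => cast (congrArg T (Fin.sum_univ_zero sz).symm) (D.X Fin.elim0 Fin.elim0 Fin.elim0)
  | (q + 1), sz, x =>
      cast (congrArg T (Fin.sum_univ_castSucc sz).symm)
        (D.star (starBlocks D q (fun m => sz m.castSucc) (fun m => x m.castSucc))
          (x (Fin.last q)))

/-- Concatenation of a tuple of words of lengths `sz 0, …, sz (q-1)`. -/
def concatB {α : Type} : ∀ {q : ℕ} (sz : Fin q → ℕ), (∀ m, Fin (sz m) → α) → Fin (∑ m, sz m) → α
  | 0, sz, _ => fun k => Fin.elim0 (cast (congrArg Fin (Fin.sum_univ_zero sz)) k)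
  | (q + 1), sz, f => fun k =>
      Fin.append (concatB (fun m => sz m.castSucc) (fun m => f m.castSucc)) (f (Fin.last q))
        (cast (congrArg Fin (Fin.sum_univ_castSucc sz)) k)

/-- A triple of words `(𝐛,𝐫,𝐬)`. -/
abbrev WordTriple (β : Type) (n d : ℕ) : Type :=
  (Fin d → β) × (Fin d → Fin n) × (Fin d → Fin n)

/-- The diagonal right place-permutation action on triples of words. -/
def wAct {d : ℕ} (w : WordTriple β n d) (σ : Equiv.Perm (Fin d)) : WordTriple β n d :=
  (w.1 ∘ σ, w.2.1 ∘ σ, w.2.2 ∘ σ)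

/-- The `k`-th entry triple `(b_k, r_k, s_k)` (with `b_k` realized in `A`). -/
def entryAt (P : GoodPair 𝕜 A β) {n d : ℕ} (w : WordTriple β n d) (k : Fin d) :
    A × Fin n × Fin n :=
  (P.bas (w.1 k), w.2.1 k, w.2.2 k)

/-- The lexicographic order on triples of words induced by the total order `ord`. -/
def wordLE (P : GoodPair 𝕜 A β) {n : ℕ} (ord : LinearOrder (A × Fin n × Fin n)) {d : ℕ}
    (w w' : WordTriple β n d) : Prop :=
  (∀ k, entryAt P w k = entryAt P w' k) ∨
    ∃ l : Fin d, (∀ k, k < l → entryAt P w k = entryAt P w' k) ∧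
      ord.lt (entryAt P w l) (entryAt P w' l)

/-- `Tri^B_0(n,d)`: the lexicographically minimal representatives of the `S_d`-orbits on
`Tri^B(n,d)`. -/
def IsTri0 (P : GoodPair 𝕜 A β) {n : ℕ} (ord : LinearOrder (A × Fin n × Fin n)) {d : ℕ}
    (w : WordTriple β n d) : Prop :=
  IsTriB P w.1 w.2.1 w.2.2 ∧ ∀ σ : Equiv.Perm (Fin d), wordLE P ord w (wAct w σ)

/-- The first `l` letters of each word. -/
def firstW {d : ℕ} (l : ℕ) (hl : l ≤ d) (w : WordTriple β n d) : WordTriple β n l :=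
  (fun k => w.1 ⟨k, lt_of_lt_of_le k.isLt hl⟩,
   fun k => w.2.1 ⟨k, lt_of_lt_of_le k.isLt hl⟩,
   fun k => w.2.2 ⟨k, lt_of_lt_of_le k.isLt hl⟩)

/-- The last `d - l` letters of each word. -/
def lastW {d : ℕ} (l : ℕ) (hl : l ≤ d) (w : WordTriple β n d) : WordTriple β n (d - l) :=
  (fun k => w.1 ⟨l + (k : ℕ), by have := k.isLt; omega⟩,
   fun k => w.2.1 ⟨l + (k : ℕ), by have := k.isLt; omega⟩,
   fun k => w.2.2 ⟨l + (k : ℕ), by have := k.isLt; omega⟩)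

/-- Concatenation of words. -/
def appF {α : Type} {d : ℕ} (l : ℕ) (hl : l ≤ d) (f : Fin l → α) (g : Fin (d - l) → α) :
    Fin d → α :=
  fun k => if hk : (k : ℕ) < l then f ⟨k, hk⟩ else g ⟨(k : ℕ) - l, by have := k.isLt; omega⟩

/-- Concatenation `T¹T²` of two triples of words. -/
def concatW {d : ℕ} (l : ℕ) (hl : l ≤ d) (p : WordTriple β n l × WordTriple β n (d - l)) :
    WordTriple β n d :=
  (appF l hl p.1.1 p.2.1, appF l hl p.1.2.1 p.2.2.1, appF l hl p.1.2.2 p.2.2.2)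

/-- `Spl_l(T)`, the set of `l`-splits of `T ∈ Tri^B_0(n,d)`. -/
def splitsF (P : GoodPair 𝕜 A β) {n : ℕ} (ord : LinearOrder (A × Fin n × Fin n)) {d : ℕ}
    (l : ℕ) (hl : l ≤ d) (w : WordTriple β n d) :
    Finset (WordTriple β n l × WordTriple β n (d - l)) :=
  (univ.image fun σ : Equiv.Perm (Fin d) =>
      (firstW l hl (wAct w σ), lastW l hl (wAct w σ))).filter
    fun p => IsTri0 P ord p.1 ∧ IsTri0 P ord p.2

/-- The number of inversions (= Coxeter length) of a permutation. -/
def invCount {d : ℕ} (σ : Equiv.Perm (Fin d)) : ℕ :=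
  (univ.filter fun kl : Fin d × Fin d => kl.1 < kl.2 ∧ σ kl.2 < σ kl.1).card

/-- The submodule `{x | x·ε = x}` (for an idempotent `ε` this is `R·ε`). -/
def rfix (𝕜 : Type) {R : Type} [CommRing 𝕜] [NonUnitalRing R] [Module 𝕜 R]
    [IsScalarTower 𝕜 R R] (ε : R) : Submodule 𝕜 R where
  carrier := {x | x * ε = x}
  add_mem' := by
    intro x y hx hy
    simp only [Set.mem_setOf_eq] at *
    rw [add_mul, hx, hy]
  zero_mem' := by simp
  smul_mem' := by
    intro c x hx
    simp only [Set.mem_setOf_eq] at *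
    rw [smul_mul_assoc, hx]

/-- Right `εSε`-module endomorphism property for a map of `S·ε = M ⊓ rfix ε`,
where `S` is the (possibly non-unital) algebra realized as the submodule `M` of `R`. -/
def IsEquivar (𝕜 : Type) {R : Type} [CommRing 𝕜] [NonUnitalRing R] [Module 𝕜 R]
    [IsScalarTower 𝕜 R R] (M : Submodule 𝕜 R) (ε : R)
    (f : ↥(M ⊓ rfix 𝕜 ε) →ₗ[𝕜] ↥(M ⊓ rfix 𝕜 ε)) : Prop :=
  ∀ (x : ↥(M ⊓ rfix 𝕜 ε)) (c : R), c ∈ M → ε * c * ε = c →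
    ∀ h : (x : R) * c ∈ M ⊓ rfix 𝕜 ε,
      ((f ⟨(x : R) * c, h⟩ : ↥(M ⊓ rfix 𝕜 ε)) : R) = (f x : R) * c

/-- `ε` is a *double centralizer idempotent* for the algebra `M ⊆ R`: the left
multiplication map `λ : M → End_{εMε}(Mε)` is bijective. -/
def IsDCI (𝕜 : Type) {R : Type} [CommRing 𝕜] [NonUnitalRing R] [Module 𝕜 R]
    [IsScalarTower 𝕜 R R] (M : Submodule 𝕜 R) (ε : R) : Prop :=
  (∀ s ∈ M, ∀ s' ∈ M, (∀ x ∈ M ⊓ rfix 𝕜 ε, s * x = s' * x) → s = s') ∧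
  (∀ f : ↥(M ⊓ rfix 𝕜 ε) →ₗ[𝕜] ↥(M ⊓ rfix 𝕜 ε), IsEquivar 𝕜 M ε f →
    ∃ s ∈ M, ∀ x : ↥(M ⊓ rfix 𝕜 ε), (f x : R) = s * (x : R))

/-!
Right multiplication by a standard basis element moves coordinates to coordinates, up to units.
The module `Ze` is generated over `eZe` by `e_0, …, e_{ℓ-1}` and `a_{ℓ,ℓ-1}`; an `eZe`-endomorphism
is determined by the images of these generators, and each image is a left multiple of the generator,
because `eZe` detects every coordinate in which it could fail to be one. This certificate passes to
`M_n(Z)^{⊗d}`, with `e` replaced by the pure tensor `π = e E_{ω₁ω₁} ⊗ ⋯ ⊗ e E_{ω_dω_d}`.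

As `d ≤ n`, the word `ω` may be taken injective. Then an element of `M_n(Z)^{⊗d} π` is recovered
from its symmetrization by multiplying with `π`, and the symmetrization lies in
`T^Z_𝔷(n,d) ξ^e`, its coordinates at non-injective column words being zero. So an endomorphism
of `T^Z_𝔷(n,d) ξ^e` induces one of `M_n(Z)^{⊗d} π` commuting with the corner of `π`, and is
therefore left multiplication by some `u`, which is necessarily `S_d`-invariant.

Finally, `T^Z_𝔷(n,d)` consists of the invariants whose coordinate at `(𝐛,𝐫,𝐬)` is divisible by
`[𝐛,𝐫,𝐬]^!_𝔠`, and each coordinate of `u` is also a coordinate, with at least the same factor, of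
`u ξ` for a suitable `ξ` in `T^Z_𝔷(n,d) ξ^e`, obtained by moving the odd letters of `ξ` to distinct
unused columns. Hence `u` lies in `T^Z_𝔷(n,d)`.
-/

section DoubleCentralizer

variable {R ι κ : Type} [NonUnitalRing R] [Module 𝕜 R]

/-- Right multiplication by `a` *detects* the `i`-th coordinate at `j`: up to a unit, the `j`-th
coordinate of `x * a` is the `i`-th coordinate of `x`. -/
def Detects (B : Module.Basis ι 𝕜 R) (a : R) (i j : ι) : Prop :=
  ∃ u : 𝕜ˣ, ∀ x, B.repr (x * a) j = u * B.repr x i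

theorem Detects.repr_eq_zero {B : Module.Basis ι 𝕜 R} {a x : R} {i j : ι}
    (h : Detects B a i j) (hx : x * a = 0) : B.repr x i = 0 := by
  obtain ⟨u, hu⟩ := h
  simpa [hx] using (hu x).symm

theorem Detects.of_repr_basis_mul [IsScalarTower 𝕜 R R] {B : Module.Basis ι 𝕜 R} {a : R} {i j : ι}
    (u : 𝕜ˣ) (h : ∀ k, B.repr (B k * a) j = if k = i then (u : 𝕜) else 0) : Detects B a i j := by
  have hcoord : B.coord j ∘ₗ LinearMap.mulRight 𝕜 a = (u : 𝕜) • B.coord i :=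
    B.ext fun k => by simp [h, Finsupp.single_apply]
  exact ⟨u, fun x => LinearMap.congr_fun hcoord x⟩

/-- A combinatorial certificate, in terms of the basis `B` of `R`, for the idempotent `ε` to be a
double centralizer idempotent. The basis elements in `right` span `R ε`, which is generated as a
right `ε R ε`-module by the basis elements `B (gen j)`, each fixed from the left by `B (proj j)`.
The field `lifts` says that what `ε R ε` cannot tell apart from `B (gen j)` is a left multiple of
`B (gen j)`; the last two fields say that coordinates can be read off after multiplying by elements
of `ε R ε` or by generators. All relations hold up to units of `𝕜`. -/
structure DetectingSystem (B : Module.Basis ι 𝕜 R) (ε : R) (κ : Type) where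
  right : Set ι
  gen : κ → ι
  proj : κ → ι
  target : ι → κ
  image : ι → ι
  idem : IsIdempotentElem ε
  mul_idem_of_mem : ∀ i ∈ right, B i * ε = B i
  mul_idem_of_notMem : ∀ i ∉ right, B i * ε = 0
  gen_mem : ∀ j, gen j ∈ right
  proj_mul_gen : ∀ j, B (proj j) * B (gen j) ∈ MulAction.orbit 𝕜ˣ (B (gen j))
  proj_mul_gen_of_ne : ∀ j j', j ≠ j' → B (proj j) * B (gen j') = 0
  spans : ∀ i ∈ right, ∃ j z, ε * B z * ε = B z ∧ B (gen j) * B z ∈ MulAction.orbit 𝕜ˣ (B i)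
  lifts : ∀ i ∈ right, ∀ j,
    (∃ a, B a * B (gen j) ∈ MulAction.orbit 𝕜ˣ (B i)) ∨
      ∃ z i', ε * B z * ε = B z ∧ B (gen j) * B z = 0 ∧ Detects B (B z) i i'
  detects_corner : ∀ i ∈ right, ∃ z i', ε * B z * ε = B z ∧ Detects B (B z) i i'
  detects_gen : ∀ i, Detects B (B (gen (target i))) i (image i)

namespace DetectingSystem

variable {B : Module.Basis ι 𝕜 R} {ε : R}

theorem eq_zero_of_mul_gen_eq_zero (S : DetectingSystem B ε κ) {x : R}
    (hx : ∀ j, x * B (S.gen j) = 0) : x = 0 :=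
  B.ext_elem fun i => by
    rw [(S.detects_gen i).repr_eq_zero (hx _), map_zero, Finsupp.zero_apply]

variable [IsScalarTower 𝕜 R R]

theorem gen_mem_rfix (S : DetectingSystem B ε κ) (j : κ) : B (S.gen j) ∈ rfix 𝕜 ε :=
  S.mul_idem_of_mem _ (S.gen_mem j)

theorem mem_span_right (S : DetectingSystem B ε κ) {x : R} (hx : x ∈ rfix 𝕜 ε) :
    x ∈ Submodule.span 𝕜 (B '' S.right) := by
  suffices hmul : ∀ y, y * ε ∈ Submodule.span 𝕜 (B '' S.right) from
    (show x * ε = x from hx) ▸ hmul x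
  intro y
  induction B.mem_span y using Submodule.span_induction with
  | mem _ hy =>
    obtain ⟨i, rfl⟩ := hy
    by_cases hi : i ∈ S.right
    · rw [S.mul_idem_of_mem i hi]
      exact Submodule.subset_span ⟨i, hi, rfl⟩
    · rw [S.mul_idem_of_notMem i hi]
      exact zero_mem _
  | zero => rw [zero_mul]; exact zero_mem _
  | add _ _ _ _ hx hy => rw [add_mul]; exact add_mem hx hy
  | smul c _ _ hx => rw [smul_mul_assoc]; exact Submodule.smul_mem _ c hx

theorem exists_mul_gen_eq (S : DetectingSystem B ε κ) (j : κ) {x : R} (hx : x ∈ rfix 𝕜 ε)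
    (hann : ∀ z, ε * z * ε = z → B (S.gen j) * z = 0 → x * z = 0) :
    ∃ s, s * B (S.gen j) = x := by
  suffices h : x ∈ LinearMap.range (LinearMap.mulRight 𝕜 (B (S.gen j))) from h
  have hsupp := B.mem_span_image.1 (S.mem_span_right hx)
  rw [← B.linearCombination_repr x, Finsupp.linearCombination_apply]
  refine Submodule.finsuppSum_mem 𝕜 _ (B.repr x) (fun i c => c • B i) fun i hi => ?_
  rcases S.lifts i (hsupp (Finsupp.mem_support_iff.2 hi)) j with ⟨a, u, ha⟩ | ⟨z, i', hz, hjz, hdet⟩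
  · refine Submodule.smul_mem _ _ ⟨(u⁻¹ : 𝕜ˣ) • B a, ?_⟩
    dsimp only at ha
    rw [LinearMap.mulRight_apply, smul_mul_assoc, ← ha, inv_smul_smul]
  · exact absurd (hdet.repr_eq_zero (hann (B z) hz hjz)) hi

variable [SMulCommClass 𝕜 R R]

theorem exists_eq_mul_left [Finite κ] (S : DetectingSystem B ε κ) (F : R →ₗ[𝕜] R)
    (hF : ∀ x, F x ∈ rfix 𝕜 ε)
    (hFmul : ∀ x ∈ rfix 𝕜 ε, ∀ z, ε * z * ε = z → F (x * z) = F x * z) :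
    ∃ u, ∀ x ∈ rfix 𝕜 ε, F x = u * x := by
  cases nonempty_fintype κ
  have hgen : ∀ j, ∃ s, s * B (S.gen j) = F (B (S.gen j)) := fun j =>
    S.exists_mul_gen_eq j (hF _) fun z hz hjz => by
      rw [← hFmul _ (S.gen_mem_rfix j) z hz, hjz, map_zero]
  choose s hs using hgen
  choose v hv using S.proj_mul_gen
  dsimp only at hv
  have hproj : ∀ j, (∑ j', (v j')⁻¹ • (s j' * B (S.proj j'))) * B (S.gen j) = F (B (S.gen j)) := by
    intro j
    rw [Finset.sum_mul, Finset.sum_eq_single_of_mem j (mem_univ j)]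
    · rw [smul_mul_assoc, mul_assoc, ← hv, mul_smul_comm, inv_smul_smul, hs]
    · intro j' _ hne
      rw [smul_mul_assoc, mul_assoc, S.proj_mul_gen_of_ne j' j hne, mul_zero, smul_zero]
  set u := ∑ j', (v j')⁻¹ • (s j' * B (S.proj j'))
  refine ⟨u, fun x hx => ?_⟩
  suffices hle : Submodule.span 𝕜 (B '' S.right) ≤ LinearMap.eqLocus F (LinearMap.mulLeft 𝕜 u) from
    hle (S.mem_span_right hx)
  rw [Submodule.span_le]
  rintro _ ⟨i, hi, rfl⟩
  obtain ⟨j, z, hz, c, hc⟩ := S.spans i hi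
  dsimp only at hc
  have hgz : F (B (S.gen j) * B z) = u * (B (S.gen j) * B z) := by
    rw [hFmul _ (S.gen_mem_rfix j) _ hz, ← hproj, mul_assoc]
  rw [← hc, mul_smul_comm, Units.smul_def, map_smul] at hgz
  exact smul_left_cancel c hgz

theorem isDCI_top [Finite κ] (S : DetectingSystem B ε κ) : IsDCI 𝕜 (⊤ : Submodule 𝕜 R) ε := by
  refine ⟨fun s _ s' _ h => sub_eq_zero.1 (S.eq_zero_of_mul_gen_eq_zero fun j => ?_),
    fun f hf => ?_⟩
  · rw [sub_mul, h _ ⟨trivial, S.gen_mem_rfix j⟩, sub_self]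
  have hε : ∀ x, LinearMap.mulRight 𝕜 ε x ∈ ⊤ ⊓ rfix 𝕜 ε := fun x =>
    ⟨trivial, by rw [LinearMap.mulRight_apply]; exact (mul_assoc _ _ _).trans (by rw [S.idem])⟩
  let F := (⊤ ⊓ rfix 𝕜 ε).subtype ∘ₗ f ∘ₗ (LinearMap.mulRight 𝕜 ε).codRestrict _ hε
  have hF : ∀ x : ↥(⊤ ⊓ rfix 𝕜 ε), F x = f x := fun x =>
    congrArg (fun y => (f y : R)) (Subtype.ext x.2.2)
  obtain ⟨u, hu⟩ := S.exists_eq_mul_left F (fun x => (f _).2.2) fun x hx z hz => by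
    have hxz : x * z ∈ ⊤ ⊓ rfix 𝕜 ε := ⟨trivial, by
      change x * z * ε = x * z
      rw [mul_assoc, ← hz, mul_assoc, S.idem]⟩
    rw [hF ⟨x * z, hxz⟩, hF ⟨x, trivial, hx⟩]
    exact hf ⟨x, trivial, hx⟩ z trivial hz hxz
  exact ⟨u, trivial, fun x => (hF x).symm.trans (hu x x.2.2)⟩

end DetectingSystem

end DoubleCentralizer

section PureTensors

theorem neg_one_pow_int_smul {M : Type} [AddCommGroup M] [Module 𝕜 M] (k : ℕ) (x : M) :
    ((-1 : ℤ) ^ k) • x = ((-1 : 𝕜ˣ) ^ k) • x := by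
  rcases Nat.even_or_odd k with h | h <;> simp [h.neg_one_pow, Units.smul_def]

variable {P : GoodPair 𝕜 A β}

namespace GoodPair

theorem bas_mem_ev {i : β} (h : P.part i ≠ 2) : P.bas i ∈ P.ev := by
  have hpart : P.part i = 0 ∨ P.part i = 1 ∨ P.part i = 2 := by
    generalize P.part i = x
    revert x
    decide
  rcases hpart with h0 | h1 | h2
  · exact P.aa_le_ev (P.bas_mem_aa i h0)
  · exact P.aa_sup_cc ▸ Submodule.mem_sup_right (P.bas_mem_cc i h1)
  · exact absurd h2 h

theorem homog_bas (P : GoodPair 𝕜 A β) (i : β) : Homog P (P.bas i) := by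
  by_cases h : P.part i = 2
  · exact Or.inr (P.bas_mem_od i h)
  · exact Or.inl (bas_mem_ev h)

theorem eq_zero_of_mem_ev_of_mem_od {a : A} (hev : a ∈ P.ev) (hod : a ∈ P.od) : a = 0 :=
  Submodule.disjoint_def.1 P.compl.disjoint a hev hod

theorem bas_mem_od_iff [Nontrivial 𝕜] {i : β} : P.bas i ∈ P.od ↔ P.part i = 2 := by
  refine ⟨fun hod => ?_, P.bas_mem_od i⟩
  by_contra h
  exact P.bas.ne_zero i (eq_zero_of_mem_ev_of_mem_od (bas_mem_ev h) hod)

end GoodPair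

theorem wAct_injective {d : ℕ} (σ : Equiv.Perm (Fin d)) :
    Function.Injective fun w : WordTriple β n d => wAct w σ := by
  rintro ⟨b, r, s⟩ ⟨b', r', s'⟩ h
  simpa [wAct, σ.surjective.injective_comp_right.eq_iff] using h

namespace Tower

variable (D : Tower 𝕜 A β n T P) {d : ℕ}

/-- The pure tensors with fixed row and column words, as a multilinear map in their entries. -/
def pureTensor (r s : Fin d → Fin n) : MultilinearMap 𝕜 (fun _ : Fin d => A) (T d) where
  toFun a := D.X a r s
  map_update_add' a i x y := by convert D.X_update_add a r s i x y
  map_update_smul' a i c x := by convert D.X_update_smul a r s i c x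

@[simp]
theorem pureTensor_apply (r s : Fin d → Fin n) (a : Fin d → A) :
    D.pureTensor r s a = D.X a r s :=
  rfl

theorem X_eq_zero {a : Fin d → A} (r s : Fin d → Fin n) {k : Fin d} (h : a k = 0) :
    D.X a r s = 0 :=
  (D.pureTensor r s).map_coord_zero k h

theorem X_smul (c : Fin d → 𝕜ˣ) (a : Fin d → A) (r s : Fin d → Fin n) :
    D.X (fun k => c k • a k) r s = (∏ k, c k) • D.X a r s := by
  simpa [Units.smul_def] using (D.pureTensor r s).map_smul_univ (fun k => (c k : 𝕜)) a

theorem repr_X (a : Fin d → A) (r s : Fin d → Fin n) (w : WordTriple β n d) :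
    (D.bas d).repr (D.X a r s) w
      = if r = w.2.1 ∧ s = w.2.2 then ∏ k, P.bas.repr (a k) (w.1 k) else 0 := by
  obtain ⟨b, r', s'⟩ := w
  have hmul : ((D.bas d).coord (b, r', s')).compMultilinearMap (D.pureTensor r s)
      = (if r = r' ∧ s = s' then (1 : 𝕜) else 0) •
        (MultilinearMap.mkPiAlgebra 𝕜 (Fin d) 𝕜).compLinearMap fun k => P.bas.coord (b k) := by
    refine Module.Basis.ext_multilinear (fun _ => P.bas) fun v => ?_
    change (D.bas d).repr (D.X (fun k => P.bas (v k)) r s) (b, r', s') = _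
    rw [← D.bas_eq, Module.Basis.repr_self, Finsupp.single_apply]
    by_cases hrs : r = r' ∧ s = s'
    · simp [hrs, Finsupp.single_apply, Finset.prod_ite_zero, funext_iff]
    · simp only [Prod.mk.injEq, hrs, and_false, if_false, zero_smul]
      rfl
  have := congrArg (fun F => F a) hmul
  by_cases hrs : r = r' ∧ s = s' <;> simpa [hrs] using this

theorem X_mul_X_of_ne {a c : Fin d → A} (ha : ∀ k, Homog P (a k)) (hc : ∀ k, Homog P (c k))
    (r : Fin d → Fin n) {s s' : Fin d → Fin n} (hs : s ≠ s') (t : Fin d → Fin n) :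
    D.X a r s * D.X c s' t = 0 := by
  rw [D.X_mul a c r s s' t ha hc, if_neg hs]

theorem X_mul_X_of_mem_ev_left {a c : Fin d → A} (ha : ∀ k, a k ∈ P.ev) (hc : ∀ k, Homog P (c k))
    (r s t : Fin d → Fin n) : D.X a r s * D.X c s t = D.X (fun k => a k * c k) r t := by
  by_cases h0 : ∃ k, a k = 0
  · obtain ⟨k, hk⟩ := h0
    rw [D.X_eq_zero r s hk, D.X_eq_zero r t (k := k) (by rw [hk, zero_mul]), zero_mul]
  · have hkoz : koz P.od a c = 0 := by
      refine Finset.card_eq_zero.2 (Finset.filter_eq_empty_iff.2 ?_)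
      rintro kl - ⟨-, hod, -⟩
      exact h0 ⟨_, GoodPair.eq_zero_of_mem_ev_of_mem_od (ha _) hod⟩
    rw [D.X_mul a c r s s t (fun k => Or.inl (ha k)) hc, if_pos rfl, hkoz, pow_zero, one_smul]

theorem X_mul_X_of_mem_ev_right {a c : Fin d → A} (ha : ∀ k, Homog P (a k))
    (hc : ∀ k, c k ∈ P.ev) (r s t : Fin d → Fin n) :
    D.X a r s * D.X c s t = D.X (fun k => a k * c k) r t := by
  by_cases h0 : ∃ k, c k = 0
  · obtain ⟨k, hk⟩ := h0
    rw [D.X_eq_zero s t hk, D.X_eq_zero r t (k := k) (by rw [hk, mul_zero]), mul_zero]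
  · have hkoz : koz P.od a c = 0 := by
      refine Finset.card_eq_zero.2 (Finset.filter_eq_empty_iff.2 ?_)
      rintro kl - ⟨-, -, hod⟩
      exact h0 ⟨_, GoodPair.eq_zero_of_mem_ev_of_mem_od (hc _) hod⟩
    rw [D.X_mul a c r s s t ha (fun k => Or.inl (hc k)), if_pos rfl, hkoz, pow_zero, one_smul]

theorem act_X_of_mem_ev {a : Fin d → A} (ha : ∀ k, a k ∈ P.ev) (σ : Equiv.Perm (Fin d))
    (r s : Fin d → Fin n) : D.act σ (D.X a r s) = D.X (a ∘ σ) (r ∘ σ) (s ∘ σ) := by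
  by_cases h0 : ∃ k, a k = 0
  · obtain ⟨k, hk⟩ := h0
    have hσk : (a ∘ σ) (σ⁻¹ k) = 0 := by
      rw [Function.comp_apply, Equiv.Perm.inv_def, Equiv.apply_symm_apply, hk]
    rw [D.X_eq_zero r s hk, D.X_eq_zero _ _ hσk, map_zero]
  · have hsgnc : sgnc P.od σ a = 0 := by
      refine Finset.card_eq_zero.2 (Finset.filter_eq_empty_iff.2 ?_)
      rintro kl - ⟨-, -, hod, -⟩
      exact h0 ⟨_, GoodPair.eq_zero_of_mem_ev_of_mem_od (ha _) hod⟩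
    rw [D.act_X σ a r s (fun k => Or.inl (ha k)), hsgnc, pow_zero, one_smul]

theorem bas_mul_bas (b b' : Fin d → β) (r s t : Fin d → Fin n) :
    D.bas d (b, r, s) * D.bas d (b', s, t)
      = ((-1 : 𝕜ˣ) ^ koz P.od (fun k => P.bas (b k)) fun k => P.bas (b' k)) •
        D.X (fun k => P.bas (b k) * P.bas (b' k)) r t := by
  rw [D.bas_eq, D.bas_eq, D.X_mul _ _ _ _ _ _ (fun k => P.homog_bas _) fun k => P.homog_bas _,
    if_pos rfl, neg_one_pow_int_smul (𝕜 := 𝕜)]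

theorem bas_mul_bas_of_ne (b b' : Fin d → β) (r : Fin d → Fin n) {s s' : Fin d → Fin n}
    (hs : s ≠ s') (t : Fin d → Fin n) : D.bas d (b, r, s) * D.bas d (b', s', t) = 0 := by
  rw [D.bas_eq, D.bas_eq,
    D.X_mul_X_of_ne (fun k => P.homog_bas _) (fun k => P.homog_bas _) r hs t]

theorem bas_mul_bas_eq_zero {b b' : Fin d → β} {k : Fin d} (h : P.bas (b k) * P.bas (b' k) = 0)
    (r s t : Fin d → Fin n) : D.bas d (b, r, s) * D.bas d (b', s, t) = 0 := by
  rw [bas_mul_bas, D.X_eq_zero r t h, smul_zero]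

theorem bas_mul_bas_mem_orbit {b b' b'' : Fin d → β}
    (h : ∀ k, P.bas (b k) * P.bas (b' k) ∈ MulAction.orbit 𝕜ˣ (P.bas (b'' k)))
    (r s t : Fin d → Fin n) :
    D.bas d (b, r, s) * D.bas d (b', s, t) ∈ MulAction.orbit 𝕜ˣ (D.bas d (b'', r, t)) := by
  choose c hc using h
  dsimp only at hc
  rw [bas_mul_bas, ← funext hc, X_smul, ← D.bas_eq, smul_smul]
  exact MulAction.mem_orbit _ _

theorem repr_bas_mul_bas (v w u : WordTriple β n d) :
    (D.bas d).repr (D.bas d v * D.bas d w) u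
      = if v.2.2 = w.2.1 ∧ v.2.1 = u.2.1 ∧ w.2.2 = u.2.2 then
          ((-1 : 𝕜ˣ) ^ koz P.od (fun k => P.bas (v.1 k)) fun k => P.bas (w.1 k)) •
            ∏ k, P.bas.repr (P.bas (v.1 k) * P.bas (w.1 k)) (u.1 k)
        else 0 := by
  obtain ⟨b, r, s⟩ := v
  obtain ⟨b', s', t⟩ := w
  by_cases hs : s = s'
  · subst hs
    simp [bas_mul_bas, repr_X, Units.smul_def]
  · simp [D.bas_mul_bas_of_ne b b' r hs t, hs]

theorem act_bas (σ : Equiv.Perm (Fin d)) (w : WordTriple β n d) :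
    D.act σ (D.bas d w)
      = ((-1 : 𝕜ˣ) ^ sgnc P.od σ fun k => P.bas (w.1 k)) • D.bas d (wAct w σ) := by
  obtain ⟨b, r, s⟩ := w
  rw [wAct, D.bas_eq, D.bas_eq, D.act_X _ _ _ _ fun k => P.homog_bas _,
    neg_one_pow_int_smul (𝕜 := 𝕜)]
  rfl

theorem repr_act (σ : Equiv.Perm (Fin d)) (x : T d) (w : WordTriple β n d) :
    (D.bas d).repr (D.act σ x) (wAct w σ)
      = ((-1 : 𝕜ˣ) ^ sgnc P.od σ fun k => P.bas (w.1 k)) • (D.bas d).repr x w := by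
  have hcoord : (D.bas d).coord (wAct w σ) ∘ₗ D.act σ
      = ((-1 : 𝕜ˣ) ^ sgnc P.od σ fun k => P.bas (w.1 k)) • (D.bas d).coord w := by
    refine (D.bas d).ext fun v => ?_
    by_cases hv : v = w
    · simp [act_bas, hv, Units.smul_def]
    · simp [act_bas, (wAct_injective σ).eq_iff, hv, Units.smul_def]
  exact LinearMap.congr_fun hcoord x

section Detects

variable [IsScalarTower 𝕜 (T d) (T d)]

theorem repr_mul_bas_eq_zero_of_ne {w u : WordTriple β n d} (h : w.2.2 ≠ u.2.2) (x : T d) :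
    (D.bas d).repr (x * D.bas d w) u = 0 := by
  have hcoord : (D.bas d).coord u ∘ₗ LinearMap.mulRight 𝕜 (D.bas d w) = 0 :=
    (D.bas d).ext fun v => by simp [repr_bas_mul_bas, h]
  exact LinearMap.congr_fun hcoord x

theorem repr_mul_bas_eq_zero {w u : WordTriple β n d} {k : Fin d}
    (h : ∀ i, P.bas.repr (P.bas i * P.bas (w.1 k)) (u.1 k) = 0) (x : T d) :
    (D.bas d).repr (x * D.bas d w) u = 0 := by
  have hcoord : (D.bas d).coord u ∘ₗ LinearMap.mulRight 𝕜 (D.bas d w) = 0 :=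
    (D.bas d).ext fun v => by
      have hprod : ∏ k, P.bas.repr (P.bas (v.1 k) * P.bas (w.1 k)) (u.1 k) = 0 :=
        Finset.prod_eq_zero (mem_univ k) (h _)
      simp [repr_bas_mul_bas, hprod]
  exact LinearMap.congr_fun hcoord x

theorem detects_bas {a i j : Fin d → β} (h : ∀ k, Detects P.bas (P.bas (a k)) (i k) (j k))
    (r s t : Fin d → Fin n) :
    Detects (D.bas d) (D.bas d (a, s, t)) (i, r, s) (j, r, t) := by
  choose c hc using h
  refine Detects.of_repr_basis_mul
    (((-1 : 𝕜ˣ) ^ koz P.od (fun k => P.bas (i k)) fun k => P.bas (a k)) * ∏ k, c k) fun v => ?_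
  obtain ⟨b, r', s'⟩ := v
  have hprod : ∏ k, P.bas.repr (P.bas (b k) * P.bas (a k)) (j k)
      = if b = i then ((∏ k, c k : 𝕜ˣ) : 𝕜) else 0 := by
    simp [hc, Finsupp.single_apply, Finset.prod_ite_zero, funext_iff]
  rw [repr_bas_mul_bas]
  dsimp only
  rw [hprod]
  by_cases hb : b = i
  · subst hb
    simp [and_comm, Units.smul_def]
  · simp [hb]

end Detects

end Tower

end PureTensors

section Signs

theorem prod_ite_neg_one {ι : Type} (s : Finset ι) (p : ι → Prop) [DecidablePred p] :
    ∏ i ∈ s, (if p i then (-1 : 𝕜ˣ) else 1) = (-1) ^ (s.filter p).card := by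
  rw [Finset.prod_ite, Finset.prod_const, Finset.prod_const_one, mul_one]

variable {d : ℕ}

theorem prod_lt_comp_perm {M : Type} [CommMonoid M] (σ : Equiv.Perm (Fin d))
    {f : Fin d → Fin d → M} (hf : ∀ i j, f i j = f j i) :
    ∏ p : Fin d × Fin d with p.1 < p.2, f (σ p.1) (σ p.2)
      = ∏ p : Fin d × Fin d with p.1 < p.2, f p.1 p.2 := by
  have hmaps : ∀ τ : Equiv.Perm (Fin d), ∀ p : Fin d × Fin d,
      p ∈ univ.filter (fun p : Fin d × Fin d => p.1 < p.2) →
      (τ p.1 ⊓ τ p.2, τ p.1 ⊔ τ p.2) ∈ univ.filter fun p : Fin d × Fin d => p.1 < p.2 :=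
    fun τ p hp => by simpa using (mem_filter.1 hp).2.ne'
  have hinv : ∀ τ : Equiv.Perm (Fin d), ∀ p : Fin d × Fin d,
      p ∈ univ.filter (fun p : Fin d × Fin d => p.1 < p.2) →
      (τ⁻¹ (τ p.1 ⊓ τ p.2) ⊓ τ⁻¹ (τ p.1 ⊔ τ p.2), τ⁻¹ (τ p.1 ⊓ τ p.2) ⊔ τ⁻¹ (τ p.1 ⊔ τ p.2)) = p :=
    fun τ p hp => by
      have hlt := (mem_filter.1 hp).2
      rcases le_total (τ p.1) (τ p.2) with h | h <;> simp [h, hlt.le]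
  refine Finset.prod_nbij' _ _ (hmaps σ) (hmaps σ⁻¹) (hinv σ)
    (by simpa only [inv_inv] using hinv σ⁻¹) fun p _ => ?_
  rcases le_total (σ p.1) (σ p.2) with h | h
  · simp [h]
  · simp [h, hf (σ p.1)]

/-- The sign with which a permutation `σ` moves the letters of a word past each other when
precisely the letters in the places `O` are odd. -/
def oddSign (𝕜 : Type) [CommRing 𝕜] (O : Fin d → Prop) (σ : Equiv.Perm (Fin d)) : 𝕜ˣ :=
  (-1) ^ (univ.filter fun p : Fin d × Fin d => p.1 < p.2 ∧ σ⁻¹ p.2 < σ⁻¹ p.1 ∧ O p.1 ∧ O p.2).card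

/-- The sign needed to sort the odd letters (those in the places `O`) of the word `t`. -/
def sortSign (𝕜 : Type) [CommRing 𝕜] {τ : Type} [LinearOrder τ] (O : Fin d → Prop)
    (t : Fin d → τ) : 𝕜ˣ :=
  (-1) ^ (univ.filter fun p : Fin d × Fin d => p.1 < p.2 ∧ O p.1 ∧ O p.2 ∧ t p.2 < t p.1).card

variable {τ : Type} [LinearOrder τ]

theorem oddSign_eq_prod (O : Fin d → Prop) (σ : Equiv.Perm (Fin d)) :
    oddSign 𝕜 O σ = ∏ p : Fin d × Fin d with p.1 < p.2,
      if σ⁻¹ p.2 < σ⁻¹ p.1 ∧ O p.1 ∧ O p.2 then -1 else 1 := by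
  rw [prod_ite_neg_one, Finset.filter_filter, oddSign]

theorem sortSign_eq_prod (O : Fin d → Prop) (t : Fin d → τ) :
    sortSign 𝕜 O t = ∏ p : Fin d × Fin d with p.1 < p.2,
      if O p.1 ∧ O p.2 ∧ t p.2 < t p.1 then -1 else 1 := by
  rw [prod_ite_neg_one, Finset.filter_filter, sortSign]

theorem sortSign_comp_mul_sortSign {O : Fin d → Prop} {t : Fin d → τ}
    (ht : ∀ i j, O i → O j → t i = t j → i = j) (σ : Equiv.Perm (Fin d)) :
    sortSign 𝕜 (O ∘ σ) (t ∘ σ) * sortSign 𝕜 O t = oddSign 𝕜 O σ := by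
  let f : Fin d → Fin d → 𝕜ˣ := fun i j => if O i ∧ O j ∧ t j < t i then -1 else 1
  have hsort : sortSign 𝕜 (O ∘ σ) (t ∘ σ) = ∏ p : Fin d × Fin d with p.1 < p.2,
      if p.1 = p.2 then 1 else if σ⁻¹ p.1 < σ⁻¹ p.2 then f p.1 p.2 else f p.2 p.1 := by
    rw [sortSign_eq_prod, ← prod_lt_comp_perm σ
      (f := fun i j => if i = j then 1 else if σ⁻¹ i < σ⁻¹ j then f i j else f j i)]
    · refine Finset.prod_congr rfl fun p hp => ?_
      have hlt := (mem_filter.1 hp).2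
      simp [hlt, hlt.ne, f]
    · intro i j
      rcases lt_trichotomy (σ⁻¹ i) (σ⁻¹ j) with h | h | h
      · have hne : i ≠ j := fun hij => h.ne (congrArg _ hij)
        simp [h, h.not_gt, hne, hne.symm, -Equiv.Perm.coe_inv]
      · simp [(σ⁻¹).injective h]
      · have hne : i ≠ j := fun hij => h.ne' (congrArg _ hij)
        simp [h, h.not_gt, hne, hne.symm, -Equiv.Perm.coe_inv]
  rw [hsort, sortSign_eq_prod, oddSign_eq_prod, ← Finset.prod_mul_distrib]
  refine Finset.prod_congr rfl fun p hp => ?_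
  have hlt := (mem_filter.1 hp).2
  by_cases hO : O p.1 ∧ O p.2
  · have hσ : σ⁻¹ p.1 ≠ σ⁻¹ p.2 := fun h => hlt.ne ((σ⁻¹).injective h)
    have htne : t p.1 ≠ t p.2 := fun h => hlt.ne (ht _ _ hO.1 hO.2 h)
    rcases lt_or_gt_of_ne hσ with h | h <;> rcases lt_or_gt_of_ne htne with h' | h' <;>
      simp [f, hO, h, h.not_gt, h', h'.not_gt, hlt.ne, -Equiv.Perm.coe_inv]
  · have hO' : ¬(O p.2 ∧ O p.1) := fun h => hO h.symm
    simp [f, ← and_assoc, hO, hO']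

theorem oddSign_swap {O : Fin d → Prop} {k l : Fin d} (hkl : k < l) (hk : O k) (hl : O l) :
    oddSign 𝕜 O (Equiv.swap k l) = -1 := by
  -- A ranking of the places in which only the pair `{k, l}` is reordered by the transposition.
  let t : Fin d → ℕ := fun p => if p = k then 0 else if p = l then 1 else p + 2
  have ht : ∀ i j, t i = t j → i = j := by
    intro i j
    simp only [t]
    split_ifs <;> grind
  have hO : O ∘ Equiv.swap k l = O := by
    ext p
    rcases eq_or_ne p k with rfl | hpk
    · simp [hk, hl]
    rcases eq_or_ne p l with rfl | hpl
    · simp [hk, hl]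
    · simp [Equiv.swap_apply_of_ne_of_ne hpk hpl]
  have htk : ∀ p, t (Equiv.swap k l p) =
      if p = k then 1 else if p = l then 0 else (p : ℕ) + 2 := by
    intro p
    simp only [t, Equiv.swap_apply_def]
    grind
  rw [← sortSign_comp_mul_sortSign (fun i j _ _ => ht i j), hO, sortSign_eq_prod, sortSign_eq_prod,
    ← Finset.prod_mul_distrib]
  refine (Finset.prod_eq_single_of_mem (k, l) (by simpa using hkl) fun p hp hne => ?_).trans ?_
  · have hlt := (mem_filter.1 hp).2
    have hiff : t (Equiv.swap k l p.2) < t (Equiv.swap k l p.1) ↔ t p.2 < t p.1 := by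
      rw [htk, htk]
      simp only [t]
      grind
    simp only [Function.comp_apply, hiff]
    split_ifs <;> simp
  · simp [t, hk, hl, hkl.ne']

end Signs

section SchurMembership

variable {P : GoodPair 𝕜 A β} {d : ℕ}

/-- The factor `[𝐛,𝐫,𝐬]^!_𝔠` of a word triple. -/
abbrev cFactor (P : GoodPair 𝕜 A β) (w : WordTriple β n d) : ℕ :=
  facSel (fun i => P.part i = 1) w.1 w.2.1 w.2.2

/-- The sign `(-1)^⟨𝐛,𝐫,𝐬⟩` of a word triple. -/
def wordSign (P : GoodPair 𝕜 A β) (ord : LinearOrder (A × Fin n × Fin n))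
    (w : WordTriple β n d) : 𝕜ˣ :=
  (-1) ^ ang P.od ord (fun k => P.bas (w.1 k)) w.2.1 w.2.2

/-- The Koszul sign `(-1)^⟨σ;𝐛⟩` of a permutation acting on a word triple. -/
def moveSign (P : GoodPair 𝕜 A β) (w : WordTriple β n d) (σ : Equiv.Perm (Fin d)) : 𝕜ˣ :=
  (-1) ^ sgnc P.od σ fun k => P.bas (w.1 k)

theorem wordSign_mul_self (ord : LinearOrder (A × Fin n × Fin n)) (w : WordTriple β n d) :
    wordSign P ord w * wordSign P ord w = 1 := by
  rw [wordSign, ← mul_pow, neg_one_mul, neg_neg, one_pow]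

theorem mco_wAct (w : WordTriple β n d) (σ : Equiv.Perm (Fin d)) (e : β × Fin n × Fin n) :
    mco (wAct w σ).1 (wAct w σ).2.1 (wAct w σ).2.2 e = mco w.1 w.2.1 w.2.2 e :=
  Finset.card_equiv σ fun k => by rw [mem_filter, mem_filter]; simp [wAct]

theorem cFactor_wAct (w : WordTriple β n d) (σ : Equiv.Perm (Fin d)) :
    cFactor P (wAct w σ) = cFactor P w := by
  have himage : (univ.image fun k => ((wAct w σ).1 k, (wAct w σ).2.1 k, (wAct w σ).2.2 k))
      = univ.image fun k => (w.1 k, w.2.1 k, w.2.2 k) := by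
    ext e
    simp only [mem_image, mem_univ, true_and]
    exact (σ.surjective.exists (p := fun k => (w.1 k, w.2.1 k, w.2.2 k) = e)).symm
  simp only [cFactor, facSel, himage, mco_wAct]

theorem IsTriB.wAct {w : WordTriple β n d} (h : IsTriB P w.1 w.2.1 w.2.2)
    (σ : Equiv.Perm (Fin d)) :
    IsTriB P (wAct w σ).1 (wAct w σ).2.1 (wAct w σ).2.2 :=
  fun k l hkl heq => h (σ k) (σ l) (σ.injective.ne hkl) heq

theorem wordSign_eq_sortSign [ord : LinearOrder (A × Fin n × Fin n)] (w : WordTriple β n d) :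
    wordSign P ord w = sortSign 𝕜 (fun k => P.bas (w.1 k) ∈ P.od)
      fun k => (P.bas (w.1 k), w.2.1 k, w.2.2 k) := by
  unfold wordSign sortSign ang
  congr!

theorem wordSign_wAct [Nontrivial 𝕜] (ord : LinearOrder (A × Fin n × Fin n))
    {w : WordTriple β n d} (h : IsTriB P w.1 w.2.1 w.2.2) (σ : Equiv.Perm (Fin d)) :
    wordSign P ord (wAct w σ) = moveSign P w σ * wordSign P ord w := by
  have ht : ∀ i j, P.bas (w.1 i) ∈ P.od → P.bas (w.1 j) ∈ P.od →
      (P.bas (w.1 i), w.2.1 i, w.2.2 i) = (P.bas (w.1 j), w.2.1 j, w.2.2 j) → i = j := by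
    intro i j hi _ hij
    by_contra hne
    simp only [Prod.mk.injEq, P.bas.injective.eq_iff] at hij
    exact h i j hne (by simp [hij]) (GoodPair.bas_mem_od_iff.1 hi)
  have hsort := sortSign_comp_mul_sortSign (𝕜 := 𝕜) ht σ
  rw [← wordSign_eq_sortSign] at hsort
  rw [wordSign_eq_sortSign, moveSign]
  refine Eq.trans ?_ (congrArg (· * wordSign P ord w) hsort)
  rw [mul_assoc, wordSign_mul_self, mul_one]
  rfl

theorem moveSign_swap [Nontrivial 𝕜] {w : WordTriple β n d} {k l : Fin d} (hkl : k < l)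
    (hk : P.part (w.1 k) = 2) (hl : P.part (w.1 l) = 2) :
    moveSign P w (Equiv.swap k l) = -1 :=
  oddSign_swap (O := fun k => P.bas (w.1 k) ∈ P.od) hkl (GoodPair.bas_mem_od_iff.2 hk)
    (GoodPair.bas_mem_od_iff.2 hl)

namespace Tower

variable (D : Tower 𝕜 A β n T P) (ord : LinearOrder (A × Fin n × Fin n))

theorem mem_SchurS_iff {x : T d} : x ∈ SchurS D d ↔
    ∀ σ w, (D.bas d).repr x (wAct w σ) = moveSign P w σ * (D.bas d).repr x w := by
  refine forall_congr' fun σ => ⟨fun hx w => ?_, fun hx => (D.bas d).ext_elem fun w => ?_⟩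
  · conv_lhs => rw [← hx, D.repr_act]
    rfl
  · have hw : wAct (wAct w σ⁻¹) σ = w := by simp [wAct, Function.comp_assoc]
    rw [← hw, D.repr_act, hx]
    rfl

theorem xiB_eq_sum [Nontrivial 𝕜] (w : WordTriple β n d) :
    xiB D ord w.1 w.2.1 w.2.2 = ∑ v ∈ univ.image (wAct w),
      (wordSign P ord w * wordSign P ord v) • D.bas d v := by
  refine (Finset.sum_nbij (fun v : WordTriple β n d => (fun k => P.bas (v.1 k), v.2))
    ?_ ?_ ?_ ?_).symm
  · intro v hv
    obtain ⟨σ, -, rfl⟩ := mem_image.1 hv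
    exact mem_image_of_mem _ (mem_univ σ)
  · rintro ⟨b, rs⟩ - ⟨b', rs'⟩ - h
    simpa [funext_iff, P.bas.injective.eq_iff] using h
  · intro v hv
    obtain ⟨σ, -, rfl⟩ := mem_image.1 hv
    exact ⟨wAct w σ, mem_image_of_mem _ (mem_univ σ), rfl⟩
  · intro v _
    rw [neg_one_pow_int_smul (𝕜 := 𝕜), pow_add, D.bas_eq]
    rfl

theorem repr_xiB [Nontrivial 𝕜] (w v : WordTriple β n d) :
    (D.bas d).repr (xiB D ord w.1 w.2.1 w.2.2) v
      = if ∃ σ, wAct w σ = v then ((wordSign P ord w * wordSign P ord v : 𝕜ˣ) : 𝕜) else 0 := by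
  simp [xiB_eq_sum, Units.smul_def, Finsupp.finsetSum_apply, Finsupp.single_apply]

theorem xiB_mem_SchurS [Nontrivial 𝕜] {w : WordTriple β n d} (h : IsTriB P w.1 w.2.1 w.2.2) :
    xiB D ord w.1 w.2.1 w.2.2 ∈ SchurS D d := by
  refine D.mem_SchurS_iff.2 fun σ v => ?_
  have horbit : (∃ τ, wAct w τ = wAct v σ) ↔ ∃ τ, wAct w τ = v :=
    ⟨fun ⟨τ, hτ⟩ => ⟨τ * σ⁻¹, by
        have := congrArg (fun v => wAct v σ⁻¹) hτ
        simpa [wAct, Function.comp_assoc] using this⟩,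
      fun ⟨τ, hτ⟩ => ⟨τ * σ, by rw [← hτ]; rfl⟩⟩
  rw [repr_xiB, repr_xiB]
  simp only [horbit]
  split_ifs with hv
  · obtain ⟨τ, rfl⟩ := hv
    rw [wordSign_wAct ord (h.wAct τ), mul_left_comm, Units.val_mul]
  · rw [mul_zero]

theorem repr_eta_self [Nontrivial 𝕜] (w : WordTriple β n d) :
    (D.bas d).repr (eta D ord w.1 w.2.1 w.2.2) w = cFactor P w := by
  have hxi := D.repr_xiB ord w w
  rw [if_pos ⟨1, rfl⟩, wordSign_mul_self, Units.val_one] at hxi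
  rw [eta, map_nsmul, Finsupp.smul_apply, hxi, nsmul_one]

theorem repr_eta_eq_zero [Nontrivial 𝕜] {w v : WordTriple β n d} (h : ∀ σ, wAct w σ ≠ v) :
    (D.bas d).repr (eta D ord w.1 w.2.1 w.2.2) v = 0 := by
  rw [eta, map_nsmul, Finsupp.smul_apply, repr_xiB, if_neg (not_exists.2 h), smul_zero]

theorem cFactor_dvd_repr_eta [Nontrivial 𝕜] (w v : WordTriple β n d) :
    (cFactor P v : 𝕜) ∣ (D.bas d).repr (eta D ord w.1 w.2.1 w.2.2) v := by
  by_cases h : ∃ σ, wAct w σ = v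
  · obtain ⟨σ, rfl⟩ := h
    rw [cFactor_wAct, eta, map_nsmul, Finsupp.smul_apply, nsmul_eq_mul]
    exact dvd_mul_right _ _
  · rw [repr_eta_eq_zero D ord (not_exists.1 h)]
    exact dvd_zero _

theorem eta_mem_SchurS [Nontrivial 𝕜] {w : WordTriple β n d} (h : IsTriB P w.1 w.2.1 w.2.2) :
    eta D ord w.1 w.2.1 w.2.2 ∈ SchurS D d :=
  nsmul_mem (D.xiB_mem_SchurS ord h) _

theorem repr_eq_zero_of_not_isTriB [Nontrivial 𝕜] (h2 : (2 : 𝕜) ∈ nonZeroDivisors 𝕜) {x : T d}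
    (hx : x ∈ SchurS D d) {w : WordTriple β n d} (hw : ¬IsTriB P w.1 w.2.1 w.2.2) :
    (D.bas d).repr x w = 0 := by
  simp only [IsTriB, not_forall, not_not, Prod.mk.injEq] at hw
  obtain ⟨k, l, hkl, ⟨hb, hr, hs⟩, hk⟩ := hw
  wlog hlt : k < l generalizing k l
  · exact this l k hkl.symm (hb ▸ hk) hb.symm hr.symm hs.symm (hkl.symm.lt_of_le (not_lt.1 hlt))
  have hfix : wAct w (Equiv.swap k l) = w := by
    have hswap : ∀ {α : Type} (f : Fin d → α), f k = f l → f ∘ Equiv.swap k l = f :=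
      fun f hf => funext fun p => by
        rw [Function.comp_apply, Equiv.swap_apply_def]
        split_ifs <;> simp_all
    simp [wAct, hswap _ hb, hswap _ hr, hswap _ hs]
  have hneg := D.mem_SchurS_iff.1 hx (Equiv.swap k l) w
  rw [hfix, moveSign_swap hlt hk (hb ▸ hk), Units.val_neg, Units.val_one, neg_one_mul,
    eq_neg_iff_add_eq_zero, ← two_mul, mul_comm] at hneg
  exact (mul_right_mem_nonZeroDivisors_eq_zero_iff h2).1 hneg

theorem support_sub_smul_eta_ssubset [Nontrivial 𝕜] {x : T d} (hx : x ∈ SchurS D d)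
    {w : WordTriple β n d} (hw : (D.bas d).repr x w ≠ 0) {c : 𝕜}
    (hc : (D.bas d).repr x w = cFactor P w * c) :
    ((D.bas d).repr (x - c • eta D ord w.1 w.2.1 w.2.2)).support
      ⊂ ((D.bas d).repr x).support := by
  rw [Finset.ssubset_iff_of_subset fun v hv => ?_]
  · refine ⟨w, Finsupp.mem_support_iff.2 hw, Finsupp.notMem_support_iff.2 ?_⟩
    rw [map_sub, map_smul, Finsupp.sub_apply, Finsupp.smul_apply, repr_eta_self, hc,
      smul_eq_mul, mul_comm, sub_self]
  · rw [Finsupp.mem_support_iff] at hv ⊢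
    contrapose! hv
    have horbit : ∀ σ, wAct w σ ≠ v := fun σ hσ => by
      have hzero := D.mem_SchurS_iff.1 hx σ w
      rw [hσ, hv] at hzero
      exact hw ((Units.mul_right_eq_zero _).1 hzero.symm)
    rw [map_sub, map_smul, Finsupp.sub_apply, Finsupp.smul_apply, hv,
      D.repr_eta_eq_zero ord horbit, smul_zero, sub_zero]

theorem mem_SchurT_of_cFactor_dvd [Nontrivial 𝕜] (h2 : (2 : 𝕜) ∈ nonZeroDivisors 𝕜) {x : T d}
    (hx : x ∈ SchurS D d) (hdvd : ∀ w, (cFactor P w : 𝕜) ∣ (D.bas d).repr x w) :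
    x ∈ SchurT D ord d := by
  induction hsupp : ((D.bas d).repr x).support using Finset.strongInduction generalizing x with
  | H s ih =>
    subst hsupp
    rcases eq_or_ne x 0 with rfl | hx0
    · exact zero_mem _
    obtain ⟨w, hw⟩ := Finsupp.ne_iff.1 ((map_ne_zero_iff _ (D.bas d).repr.injective).2 hx0)
    have hTri : IsTriB P w.1 w.2.1 w.2.2 := by
      by_contra h
      exact hw (D.repr_eq_zero_of_not_isTriB h2 hx h)
    obtain ⟨c, hc⟩ := hdvd w
    have heta : c • eta D ord w.1 w.2.1 w.2.2 ∈ SchurT D ord d :=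
      Submodule.smul_mem _ c (Submodule.subset_span ⟨_, _, _, hTri, rfl⟩)
    rw [← sub_add_cancel x (c • eta D ord w.1 w.2.1 w.2.2)]
    refine add_mem (ih _ (D.support_sub_smul_eta_ssubset ord hx hw hc)
      (sub_mem hx (Submodule.smul_mem _ c (D.eta_mem_SchurS ord hTri))) (fun v => ?_) rfl) heta
    rw [map_sub, map_smul, Finsupp.sub_apply, Finsupp.smul_apply]
    exact dvd_sub (hdvd v) ((D.cFactor_dvd_repr_eta ord w v).mul_left c)

theorem mem_SchurT_iff [Nontrivial 𝕜] (h2 : (2 : 𝕜) ∈ nonZeroDivisors 𝕜) {x : T d} :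
    x ∈ SchurT D ord d ↔ x ∈ SchurS D d ∧ ∀ w, (cFactor P w : 𝕜) ∣ (D.bas d).repr x w := by
  refine ⟨fun hx => ?_, fun h => D.mem_SchurT_of_cFactor_dvd ord h2 h.1 h.2⟩
  induction hx using Submodule.span_induction with
  | mem _ hy =>
    obtain ⟨b, r, s, hTri, rfl⟩ := hy
    exact ⟨D.eta_mem_SchurS ord (w := (b, r, s)) hTri, D.cFactor_dvd_repr_eta ord (b, r, s)⟩
  | zero => exact ⟨zero_mem _, fun w => by simp⟩
  | add x y _ _ hx hy =>
    exact ⟨add_mem hx.1 hy.1, fun w => by simpa using dvd_add (hx.2 w) (hy.2 w)⟩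
  | smul c x _ hx =>
    exact ⟨Submodule.smul_mem _ c hx.1, fun w => by simpa using (hx.2 w).mul_left c⟩

end Tower

end SchurMembership

section TensorSystem

variable {P : GoodPair 𝕜 A β} {d : ℕ} {e : A}

namespace Tower

variable (D : Tower 𝕜 A β n T P)

theorem bas_mul_X_const (he : e ∈ P.ev) (b : Fin d → β) (r s t : Fin d → Fin n) :
    D.bas d (b, r, s) * D.X (fun _ => e) s t = D.X (fun k => P.bas (b k) * e) r t := by
  rw [D.bas_eq, D.X_mul_X_of_mem_ev_right (fun k => P.homog_bas _) fun _ => he]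

theorem X_const_mul_bas (he : e ∈ P.ev) (b : Fin d → β) (r s t : Fin d → Fin n) :
    D.X (fun _ => e) r s * D.bas d (b, s, t) = D.X (fun k => e * P.bas (b k)) r t := by
  rw [D.bas_eq, D.X_mul_X_of_mem_ev_left (fun _ => he) fun k => P.homog_bas _]

theorem corner_bas (he : e ∈ P.ev) (hee : IsIdempotentElem e) {b : Fin d → β}
    (hb : ∀ k, e * P.bas (b k) * e = P.bas (b k)) (s t : Fin d → Fin n) :
    D.X (fun _ => e) s s * D.bas d (b, s, t) * D.X (fun _ => e) t t = D.bas d (b, s, t) := by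
  have hl : ∀ k, e * P.bas (b k) = P.bas (b k) := fun k => by
    rw [← hb k, ← mul_assoc, ← mul_assoc, hee.eq]
  have hr : ∀ k, P.bas (b k) * e = P.bas (b k) := fun k => by rw [← hb k, mul_assoc, hee.eq]
  rw [D.X_const_mul_bas he]
  simp only [hl]
  rw [← D.bas_eq, D.bas_mul_X_const he]
  simp only [hr]
  rw [← D.bas_eq]

end Tower

/-- The `d`-fold tensor power of a detecting system, localised at the pure tensor
`e E_{ω₁ω₁} ⊗ ⋯ ⊗ e E_{ω_d ω_d}` instead of at the much larger idempotent `ξ^e`. -/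
def DetectingSystem.tensor {κ : Type} [IsScalarTower 𝕜 (T d) (T d)]
    (S : DetectingSystem P.bas e κ) (D : Tower 𝕜 A β n T P) (he : e ∈ P.ev) (ω : Fin d → Fin n) :
    DetectingSystem (D.bas d) (D.X (fun _ => e) ω ω) ((Fin d → κ) × (Fin d → Fin n)) where
  right := {w | w.2.2 = ω ∧ ∀ k, w.1 k ∈ S.right}
  gen j := (S.gen ∘ j.1, j.2, ω)
  proj j := (S.proj ∘ j.1, j.2, j.2)
  target w := (S.target ∘ w.1, w.2.2)
  image w := (S.image ∘ w.1, w.2.1, ω)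
  idem := by
    rw [IsIdempotentElem, D.X_mul_X_of_mem_ev_left (fun _ => he) fun _ => Or.inl he, S.idem]
  mul_idem_of_mem := by
    rintro ⟨b, r, _⟩ ⟨rfl, hb⟩
    rw [D.bas_mul_X_const he, D.bas_eq]
    exact congrArg (D.X · r _) (funext fun k => S.mul_idem_of_mem _ (hb k))
  mul_idem_of_notMem := by
    rintro ⟨b, r, s⟩ hw
    rcases ne_or_eq s ω with hs | rfl
    · rw [D.bas_eq, D.X_mul_X_of_ne (fun k => P.homog_bas _) (fun _ => Or.inl he) r hs]
    · obtain ⟨k, hk⟩ : ∃ k, b k ∉ S.right := by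
        simpa only [Set.mem_ofPred_eq, true_and, not_forall] using hw
      rw [D.bas_mul_X_const he]
      exact D.X_eq_zero r s (S.mul_idem_of_notMem _ hk)
  gen_mem j := ⟨rfl, fun k => S.gen_mem _⟩
  proj_mul_gen j := D.bas_mul_bas_mem_orbit (fun k => S.proj_mul_gen _) _ _ _
  proj_mul_gen_of_ne := by
    rintro ⟨j, r⟩ ⟨j', r'⟩ hne
    rcases ne_or_eq r r' with hr | rfl
    · exact D.bas_mul_bas_of_ne _ _ _ hr _
    · obtain ⟨k, hk⟩ := Function.ne_iff.1 fun h => hne (congrArg (·, r) h)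
      exact D.bas_mul_bas_eq_zero (k := k) (S.proj_mul_gen_of_ne _ _ hk) _ _ _
  spans := by
    rintro ⟨b, r, _⟩ ⟨rfl, hb⟩
    choose j z hz hjz using fun k => S.spans (b k) (hb k)
    exact ⟨(j, r), (z, _, _), D.corner_bas he S.idem hz _ _, D.bas_mul_bas_mem_orbit hjz _ _ _⟩
  lifts := by
    rintro ⟨b, r, _⟩ ⟨rfl, hb⟩ ⟨j, r'⟩
    by_cases hlift : ∀ k, ∃ a, P.bas a * P.bas (S.gen (j k)) ∈ MulAction.orbit 𝕜ˣ (P.bas (b k))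
    · choose a ha using hlift
      exact Or.inl ⟨(a, r, r'), D.bas_mul_bas_mem_orbit ha _ _ _⟩
    · obtain ⟨k₀, hk₀⟩ := not_forall.1 hlift
      have hdetect : ∀ k, ∃ z i', e * P.bas z * e = P.bas z ∧
          (k = k₀ → P.bas (S.gen (j k)) * P.bas z = 0) ∧ Detects P.bas (P.bas z) (b k) i' := by
        intro k
        rcases eq_or_ne k k₀ with rfl | hk
        · obtain ⟨z, i', hz, hjz, hdet⟩ := (S.lifts _ (hb k) (j k)).resolve_left hk₀
          exact ⟨z, i', hz, fun _ => hjz, hdet⟩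
        · obtain ⟨z, i', hz, hdet⟩ := S.detects_corner _ (hb k)
          exact ⟨z, i', hz, fun h => absurd h hk, hdet⟩
      choose z i' hz hjz hdet using hdetect
      exact Or.inr ⟨(z, _, _), (i', r, _), D.corner_bas he S.idem hz _ _,
        D.bas_mul_bas_eq_zero (hjz k₀ rfl) _ _ _, D.detects_bas hdet _ _ _⟩
  detects_corner := by
    rintro ⟨b, r, _⟩ ⟨rfl, hb⟩
    choose z i' hz hdet using fun k => S.detects_corner (b k) (hb k)
    exact ⟨(z, _, _), (i', r, _), D.corner_bas he S.idem hz _ _, D.detects_bas hdet _ _ _⟩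
  detects_gen w := D.detects_bas (fun k => S.detects_gen _) _ _ _

end TensorSystem

section Symmetrization

variable {P : GoodPair 𝕜 A β} {d : ℕ} {e : A}

theorem cFactor_eq_one {w : WordTriple β n d} (h : Function.Injective w.2.2) : cFactor P w = 1 := by
  refine Finset.prod_eq_one fun t _ =>
    Nat.factorial_eq_one.2 (Finset.card_le_one.2 fun k hk l hl => ?_)
  rw [mem_filter] at hk hl
  exact h (congrArg (fun t => t.2.2) (hk.2.trans hl.2.symm))

namespace Tower

variable (D : Tower 𝕜 A β n T P)

theorem X_const_mul_X_const (he : e ∈ P.ev) (hee : IsIdempotentElem e) (r s t : Fin d → Fin n) :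
    D.X (fun _ => e) r s * D.X (fun _ => e) s t = D.X (fun _ => e) r t := by
  rw [D.X_mul_X_of_mem_ev_left (fun _ => he) fun _ => Or.inl he, hee]

theorem X_const_mul_X_const_of_ne (he : e ∈ P.ev) (r : Fin d → Fin n) {s s' : Fin d → Fin n}
    (hs : s ≠ s') (t : Fin d → Fin n) : D.X (fun _ => e) r s * D.X (fun _ => e) s' t = 0 :=
  D.X_mul_X_of_ne (fun _ => Or.inl he) (fun _ => Or.inl he) r hs t

theorem act_X_const (he : e ∈ P.ev) (σ : Equiv.Perm (Fin d)) (r s : Fin d → Fin n) :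
    D.act σ (D.X (fun _ => e) r s) = D.X (fun _ => e) (r ∘ σ) (s ∘ σ) :=
  D.act_X_of_mem_ev (fun _ => he) σ r s

theorem xiIdem_mul_X_const (he : e ∈ P.ev) (hee : IsIdempotentElem e) (s t : Fin d → Fin n) :
    xiIdem D e d * D.X (fun _ => e) s t = D.X (fun _ => e) s t := by
  rw [xiIdem, Finset.sum_mul, Finset.sum_eq_single_of_mem s (mem_univ s),
    D.X_const_mul_X_const he hee]
  exact fun r _ hr => D.X_const_mul_X_const_of_ne he r hr t

theorem X_const_mul_xiIdem (he : e ∈ P.ev) (hee : IsIdempotentElem e) (s t : Fin d → Fin n) :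
    D.X (fun _ => e) s t * xiIdem D e d = D.X (fun _ => e) s t := by
  rw [xiIdem, Finset.mul_sum, Finset.sum_eq_single_of_mem t (mem_univ t),
    D.X_const_mul_X_const he hee]
  exact fun r _ hr => D.X_const_mul_X_const_of_ne he s hr.symm r

theorem sum_X_const_mul_X_const (he : e ∈ P.ev) (hee : IsIdempotentElem e) (ω : Fin d → Fin n) :
    ∑ s, D.X (fun _ => e) s ω * D.X (fun _ => e) ω s = xiIdem D e d :=
  Finset.sum_congr rfl fun s _ => D.X_const_mul_X_const he hee s ω s

theorem act_one (x : T d) : D.act 1 x = x := by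
  suffices h : D.act 1 = LinearMap.id from LinearMap.congr_fun h x
  refine (D.bas d).ext fun w => ?_
  have hsgnc : sgnc P.od 1 (fun k => P.bas (w.1 k)) = 0 :=
    Finset.card_eq_zero.2 (Finset.filter_eq_empty_iff.2 fun p _ hp => hp.1.not_gt hp.2.1)
  rw [act_bas, hsgnc, pow_zero, one_smul]
  rfl

/-- The sum of the translates of a tensor under the symmetric group. -/
def symmetrize : T d →ₗ[𝕜] T d := ∑ σ, D.act σ

theorem symmetrize_apply (x : T d) : D.symmetrize x = ∑ σ, D.act σ x :=
  LinearMap.sum_apply _ _ _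

theorem symmetrize_mem_SchurS (x : T d) : D.symmetrize x ∈ SchurS D d := fun σ => by
  rw [symmetrize_apply, map_sum]
  exact Fintype.sum_equiv (Equiv.mulRight σ) _ _ fun τ => D.act_act τ σ x

theorem mul_symmetrize {x : T d} (hx : x ∈ SchurS D d) (y : T d) :
    x * D.symmetrize y = D.symmetrize (x * y) := by
  simp only [symmetrize_apply, Finset.mul_sum, D.act_mul, show ∀ σ, D.act σ x = x from hx]

theorem symmetrize_mul (x : T d) {y : T d} (hy : y ∈ SchurS D d) :
    D.symmetrize x * y = D.symmetrize (x * y) := by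
  simp only [symmetrize_apply, Finset.sum_mul, D.act_mul, show ∀ σ, D.act σ y = y from hy]

theorem xiIdem_mem_SchurS (he : e ∈ P.ev) : xiIdem D e d ∈ SchurS D d := fun σ => by
  rw [xiIdem, map_sum]
  exact Fintype.sum_equiv (σ.arrowCongr (Equiv.refl _)).symm _ _ fun r => D.act_X_const he σ r r

theorem act_mul_X_const (he : e ∈ P.ev) {x : T d} {ω : Fin d → Fin n}
    (hx : x * D.X (fun _ => e) ω ω = x) (σ : Equiv.Perm (Fin d)) :
    D.act σ x * D.X (fun _ => e) (ω ∘ σ) (ω ∘ σ) = D.act σ x := by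
  rw [← D.act_X_const he, ← D.act_mul, hx]

theorem symmetrize_mul_X_const (he : e ∈ P.ev) {x : T d} {ω : Fin d → Fin n}
    (hω : Function.Injective ω) (hx : x * D.X (fun _ => e) ω ω = x) :
    D.symmetrize x * D.X (fun _ => e) ω ω = x := by
  rw [symmetrize_apply, Finset.sum_mul, Finset.sum_eq_single_of_mem 1 (mem_univ _), D.act_one, hx]
  intro σ _ hσ
  have hne : ω ∘ σ ≠ ω := fun h => hσ (Equiv.ext fun k => hω (congrFun h k))
  rw [← D.act_mul_X_const he hx, mul_assoc, D.X_const_mul_X_const_of_ne he _ hne, mul_zero]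

theorem repr_mul_X_const [IsScalarTower 𝕜 (T d) (T d)] (he : e ∈ P.ev) (x : T d)
    (s : Fin d → Fin n) {t : Fin d → Fin n} {w : WordTriple β n d} (h : t ≠ w.2.2) :
    (D.bas d).repr (x * D.X (fun _ => e) s t) w = 0 := by
  have hcoord : (D.bas d).coord w ∘ₗ LinearMap.mulRight 𝕜 (D.X (fun _ => e) s t) = 0 := by
    refine (D.bas d).ext fun v => ?_
    obtain ⟨b, r, s'⟩ := v
    rcases eq_or_ne s' s with rfl | hs
    · simp [D.bas_mul_X_const he, repr_X, h]
    · simp [D.bas_eq, D.X_mul_X_of_ne (fun _ => P.homog_bas _) (fun _ => Or.inl he) r hs t]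
  exact LinearMap.congr_fun hcoord x

theorem repr_symmetrize_eq_zero [IsScalarTower 𝕜 (T d) (T d)] (he : e ∈ P.ev) {x : T d}
    {ω : Fin d → Fin n} (hω : Function.Injective ω) (hx : x * D.X (fun _ => e) ω ω = x)
    {w : WordTriple β n d} (hw : ¬Function.Injective w.2.2) :
    (D.bas d).repr (D.symmetrize x) w = 0 := by
  rw [symmetrize_apply, map_sum, Finsupp.finsetSum_apply]
  refine Finset.sum_eq_zero fun σ _ => ?_
  rw [← D.act_mul_X_const he hx]
  exact D.repr_mul_X_const he _ _ fun h => hw (h ▸ hω.comp σ.injective)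

/-- The left ideal `T^A_𝔞(n,d) ξ^e` of the generalized Schur algebra. -/
abbrev schurIdeal [IsScalarTower 𝕜 (T d) (T d)] (ord : LinearOrder (A × Fin n × Fin n)) (e : A) :
    Submodule 𝕜 (T d) :=
  SchurT D ord d ⊓ rfix 𝕜 (xiIdem D e d)

theorem symmetrize_mem_schurIdeal [Nontrivial 𝕜] (h2 : (2 : 𝕜) ∈ nonZeroDivisors 𝕜)
    [IsScalarTower 𝕜 (T d) (T d)] (ord : LinearOrder (A × Fin n × Fin n)) (he : e ∈ P.ev)
    (hee : IsIdempotentElem e) {x : T d} {ω : Fin d → Fin n} (hω : Function.Injective ω)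
    (hx : x * D.X (fun _ => e) ω ω = x) :
    D.symmetrize x ∈ D.schurIdeal ord e := by
  refine ⟨D.mem_SchurT_of_cFactor_dvd ord h2 (D.symmetrize_mem_SchurS x) fun w => ?_, ?_⟩
  · by_cases hw : Function.Injective w.2.2
    · rw [cFactor_eq_one hw, Nat.cast_one]
      exact one_dvd _
    · rw [D.repr_symmetrize_eq_zero he hω hx hw]
      exact dvd_zero _
  · change D.symmetrize x * _ = _
    rw [D.symmetrize_mul _ (D.xiIdem_mem_SchurS he), ← hx, mul_assoc, D.X_const_mul_xiIdem he hee]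

end Tower

end Symmetrization

section Descent

variable {P : GoodPair 𝕜 A β} {d : ℕ} {e : A} {κ : Type} {D : Tower 𝕜 A β n T P}
  {ord : LinearOrder (A × Fin n × Fin n)} {ω : Fin d → Fin n}

namespace DetectingSystem

variable [Nontrivial 𝕜] [IsScalarTower 𝕜 (T d) (T d)]

theorem eq_zero_of_forall_mul_eq_zero (h2 : (2 : 𝕜) ∈ nonZeroDivisors 𝕜) (he : e ∈ P.ev)
    (hee : IsIdempotentElem e) (hω : Function.Injective ω)
    (S : DetectingSystem (D.bas d) (D.X (fun _ => e) ω ω) κ) {y : T d}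
    (hy : ∀ x ∈ D.schurIdeal ord e, y * x = 0) : y = 0 := by
  refine S.eq_zero_of_mul_gen_eq_zero fun j => ?_
  have hgen := S.gen_mem_rfix j
  rw [← D.symmetrize_mul_X_const he hω hgen, ← mul_assoc,
    hy _ (D.symmetrize_mem_schurIdeal h2 ord he hee hω hgen), zero_mul]

theorem apply_mul_eq (h2 : (2 : 𝕜) ∈ nonZeroDivisors 𝕜) (he : e ∈ P.ev)
    (hee : IsIdempotentElem e) (hω : Function.Injective ω)
    {f : D.schurIdeal (d := d) ord e →ₗ[𝕜] D.schurIdeal (d := d) ord e}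
    (hf : IsEquivar 𝕜 (SchurT D ord d) (xiIdem D e d) f)
    (x : D.schurIdeal ord e) {q : T d} (hξq : xiIdem D e d * q = q)
    (hq : q * D.X (fun _ => e) ω ω = q) (h : D.symmetrize ((x : T d) * q) ∈ D.schurIdeal ord e) :
    (f x : T d) * q = f ⟨D.symmetrize ((x : T d) * q), h⟩ * D.X (fun _ => e) ω ω := by
  obtain ⟨hqT, hqξ⟩ := D.symmetrize_mem_schurIdeal h2 ord he hee hω hq
  have hcorner : xiIdem D e d * D.symmetrize q * xiIdem D e d = D.symmetrize q := by
    rw [D.mul_symmetrize (D.xiIdem_mem_SchurS he), hξq]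
    exact hqξ
  have hxq := D.mul_symmetrize ((D.mem_SchurT_iff ord h2).1 x.2.1).1 q
  have hmul := hf x (D.symmetrize q) hqT hcorner (hxq ▸ h)
  simp only [hxq] at hmul
  rw [hmul, mul_assoc, D.symmetrize_mul_X_const he hω hq]

theorem exists_corner_equivariant (h2 : (2 : 𝕜) ∈ nonZeroDivisors 𝕜) (he : e ∈ P.ev)
    (hee : IsIdempotentElem e) (hω : Function.Injective ω)
    {f : D.schurIdeal (d := d) ord e →ₗ[𝕜] D.schurIdeal (d := d) ord e}
    (hf : IsEquivar 𝕜 (SchurT D ord d) (xiIdem D e d) f) :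
    ∃ F : T d →ₗ[𝕜] T d, (∀ y, F y ∈ rfix 𝕜 (D.X (fun _ => e) ω ω)) ∧
      (∀ y ∈ rfix 𝕜 (D.X (fun _ => e) ω ω), ∀ z,
        D.X (fun _ => e) ω ω * z * D.X (fun _ => e) ω ω = z → F (y * z) = F y * z) ∧
      ∀ (x : D.schurIdeal ord e) (q : T d), xiIdem D e d * q = q →
        q * D.X (fun _ => e) ω ω = q → F ((x : T d) * q) = f x * q := by
  have hξπ := D.xiIdem_mul_X_const he hee ω ω
  have hππ : ∀ y : T d, y * D.X (fun _ => e) ω ω * D.X (fun _ => e) ω ω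
      = y * D.X (fun _ => e) ω ω := fun y => by rw [mul_assoc, D.X_const_mul_X_const he hee]
  set π := D.X (fun _ => e) ω ω
  have hsym : ∀ y, D.symmetrize (y * π) ∈ D.schurIdeal ord e := fun y =>
    D.symmetrize_mem_schurIdeal h2 ord he hee hω (hππ y)
  -- Multiplication by `π` undoes the symmetrization, as `ω` is injective.
  let F : T d →ₗ[𝕜] T d := LinearMap.mulRight 𝕜 π ∘ₗ Submodule.subtype _ ∘ₗ f ∘ₗ
    (D.symmetrize ∘ₗ LinearMap.mulRight 𝕜 π).codRestrict _ hsym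
  have hF : ∀ y (h : D.symmetrize y ∈ D.schurIdeal ord e), y * π = y → F y = f ⟨_, h⟩ * π := by
    intro y h hy
    simp [F, LinearMap.codRestrict, hy]
  have hFmul : ∀ (x : D.schurIdeal ord e) (q : T d), xiIdem D e d * q = q → q * π = q →
      F ((x : T d) * q) = f x * q := by
    intro x q hξq hq
    have hxq : (x : T d) * q * π = x * q := by rw [mul_assoc, hq]
    have h := hxq ▸ hsym (x * q)
    rw [apply_mul_eq h2 he hee hω hf x hξq hq h, hF _ h hxq]
  refine ⟨F, fun y => hππ _, fun y (hy : y * π = y) z hz => ?_, hFmul⟩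
  have h := hy ▸ hsym y
  have hπz : π * z = z := by rw [← hz, ← mul_assoc, ← mul_assoc, D.X_const_mul_X_const he hee]
  have hzπ : z * π = z := by rw [← hz, hππ]
  have hξz : xiIdem D e d * z = z := by rw [← hπz, ← mul_assoc, hξπ]
  rw [hF y h hy, mul_assoc, hπz, ← hFmul ⟨_, h⟩ z hξz hzπ, ← hπz, ← mul_assoc, ← mul_assoc,
    D.symmetrize_mul_X_const he hω hy, hy]

variable [SMulCommClass 𝕜 (T d) (T d)]

theorem exists_apply_eq_mul [Finite κ] (h2 : (2 : 𝕜) ∈ nonZeroDivisors 𝕜) (he : e ∈ P.ev)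
    (hee : IsIdempotentElem e) (hω : Function.Injective ω)
    (S : DetectingSystem (D.bas d) (D.X (fun _ => e) ω ω) κ)
    {f : D.schurIdeal (d := d) ord e →ₗ[𝕜] D.schurIdeal (d := d) ord e}
    (hf : IsEquivar 𝕜 (SchurT D ord d) (xiIdem D e d) f) :
    ∃ u, ∀ x, (f x : T d) = u * x := by
  obtain ⟨F, hFπ, hFcorner, hF⟩ := exists_corner_equivariant h2 he hee hω hf
  obtain ⟨u, hu⟩ := S.exists_eq_mul_left F hFπ hFcorner
  refine ⟨u, fun x => ?_⟩
  have hx : (x : T d) * xiIdem D e d = x := x.2.2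
  have hfx : (f x : T d) * xiIdem D e d = f x := (f x).2.2
  rw [← hx, ← hfx, ← D.sum_X_const_mul_X_const he hee ω, Finset.mul_sum, Finset.mul_sum,
    Finset.mul_sum]
  refine Finset.sum_congr rfl fun s _ => ?_
  have hsω := D.X_const_mul_X_const he hee s ω ω
  have hxs : (x : T d) * D.X (fun _ => e) s ω ∈ rfix 𝕜 (D.X (fun _ => e) ω ω) :=
    (mul_assoc _ _ _).trans (congrArg _ hsω)
  rw [← mul_assoc, ← hF x _ (D.xiIdem_mul_X_const he hee s ω) hsω, hu _ hxs]
  simp only [mul_assoc]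

theorem exists_mem_SchurS_apply_eq_mul [Finite κ] (h2 : (2 : 𝕜) ∈ nonZeroDivisors 𝕜)
    (he : e ∈ P.ev) (hee : IsIdempotentElem e) (hω : Function.Injective ω)
    (S : DetectingSystem (D.bas d) (D.X (fun _ => e) ω ω) κ)
    {f : D.schurIdeal (d := d) ord e →ₗ[𝕜] D.schurIdeal (d := d) ord e}
    (hf : IsEquivar 𝕜 (SchurT D ord d) (xiIdem D e d) f) :
    ∃ u ∈ SchurS D d, ∀ x, (f x : T d) = u * x := by
  obtain ⟨u, hu⟩ := S.exists_apply_eq_mul h2 he hee hω hf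
  have hinv : ∀ y : D.schurIdeal (d := d) ord e, (y : T d) ∈ SchurS D d := fun y =>
    ((D.mem_SchurT_iff ord h2).1 y.2.1).1
  refine ⟨u, fun σ => sub_eq_zero.1 ?_, hu⟩
  refine S.eq_zero_of_forall_mul_eq_zero h2 he hee hω (ord := ord) fun x hx => ?_
  have hmul := hinv (f ⟨x, hx⟩) σ
  rw [hu, D.act_mul, hinv ⟨x, hx⟩ σ] at hmul
  rw [sub_mul, hmul, sub_self]

end DetectingSystem

end Descent

section Integrality

theorem exists_injOn_eqOn_compl {d : ℕ} (hdn : d ≤ n) (s : Fin d → Fin n) (L : Set (Fin d)) :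
    ∃ s' : Fin d → Fin n, (∀ k ∉ L, s' k = s k) ∧ ∀ k ∈ L, ∀ l, s' k = s' l → k = l := by
  obtain ⟨f⟩ : Nonempty (L ↪ ↥((univ.filter (· ∉ L)).image s)ᶜ) := by
    refine Function.Embedding.nonempty_of_card_le ?_
    have hpartition := Finset.card_filter_add_card_filter_not (s := univ) (· ∈ L)
    have himage := Finset.card_image_le (s := univ.filter (· ∉ L)) (f := s)
    simp only [Finset.card_univ, Fintype.card_fin] at hpartition
    rw [Fintype.card_coe, Finset.card_compl, Fintype.card_fin, Fintype.card_subtype]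
    omega
  have hf : ∀ k l, l ∉ L → (f k : Fin n) ≠ s l := fun k l hl h =>
    mem_compl.1 (f k).2 (h ▸ mem_image_of_mem s (mem_filter.2 ⟨mem_univ l, hl⟩))
  refine ⟨fun k => if h : k ∈ L then f ⟨k, h⟩ else s k, fun k hk => dif_neg hk, fun k hk l h => ?_⟩
  by_cases hl : l ∈ L
  · simp only [hk, hl, dite_true] at h
    exact congrArg Subtype.val (f.injective (Subtype.ext h))
  · simp only [hk, hl, dite_true, dite_false] at h
    exact absurd h (hf _ l hl)

variable {P : GoodPair 𝕜 A β} {d : ℕ} {e : A} {κ : Type}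

theorem facSel_eq_one {sel : β → Prop} {w : WordTriple β n d} (h : ∀ k, ¬sel (w.1 k)) :
    facSel sel w.1 w.2.1 w.2.2 = 1 := by
  rw [facSel, Finset.filter_eq_empty_iff.2, Finset.prod_empty]
  rintro _ ht
  obtain ⟨k, -, rfl⟩ := mem_image.1 ht
  exact h k

theorem facSel_dvd_facSel {sel : β → Prop} {w w' : WordTriple β n d}
    (h : ∀ k, sel (w.1 k) → (w.1 k, w.2.1 k, w.2.2 k) = (w'.1 k, w'.2.1 k, w'.2.2 k)) :
    facSel sel w.1 w.2.1 w.2.2 ∣ facSel sel w'.1 w'.2.1 w'.2.2 := by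
  refine (Finset.prod_dvd_prod_of_dvd _ (fun t => (mco w'.1 w'.2.1 w'.2.2 t).factorial) ?_).trans
    (Finset.prod_dvd_prod_of_subset _ _ _ ?_)
  · intro t ht
    refine Nat.factorial_dvd_factorial (Finset.card_le_card fun k hk => ?_)
    obtain ⟨-, rfl⟩ := mem_filter.1 hk
    exact mem_filter.2 ⟨mem_univ k, (h k (mem_filter.1 ht).2).symm⟩
  · intro t ht
    obtain ⟨himage, hsel⟩ := mem_filter.1 ht
    obtain ⟨k, -, rfl⟩ := mem_image.1 himage
    exact mem_filter.2 ⟨mem_image.2 ⟨k, mem_univ k, (h k hsel).symm⟩, hsel⟩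

/-- A detecting system compatible with the partition `B_𝔞 ⊔ B_𝔠 ⊔ B_1` of the basis. The last four
fields guarantee that a coordinate of `u` with factor `[𝐛,𝐫,𝐬]^!_𝔠` is also a coordinate of
`u * ξ` with the same factor, for a suitable `ξ` in `T^A_𝔞(n,d) ξ^e`. -/
structure IntegralDetectingSystem (P : GoodPair 𝕜 A β) (e : A) (κ : Type) extends
    DetectingSystem P.bas e κ where
  idem_even : e ∈ P.ev
  gen_part : ∀ j, P.part (gen j) ≠ 1
  image_eq : ∀ i, P.part (gen (target i)) ≠ 2 → image i = i
  target_unique : ∀ i j, P.part (gen (target i)) ≠ 2 → P.part (gen j) ≠ 2 →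
    (∃ i', P.bas.repr (P.bas i' * P.bas (gen j)) i ≠ 0) → target i = j
  part_ne_one : ∀ i, P.part (gen (target i)) = 2 → P.part i ≠ 1

namespace IntegralDetectingSystem

variable {D : Tower 𝕜 A β n T P} {ord : LinearOrder (A × Fin n × Fin n)}

section Probe

variable (S : IntegralDetectingSystem P e κ) {b : Fin d → β} {s s' : Fin d → Fin n}

/-- The word triple whose `ξ` probes the coordinates at the basis word `𝐛` with columns `s`: the
generators detecting the letters of `𝐛`, in rows `s` and columns `s'`. -/
abbrev probe (b : Fin d → β) (s s' : Fin d → Fin n) : WordTriple β n d :=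
  (S.gen ∘ S.target ∘ b, s, s')

theorem wAct_probe_eq_self {σ : Equiv.Perm (Fin d)}
    (heven : ∀ k, P.part (S.gen (S.target (b k))) ≠ 2 → s' k = s k)
    (hodd : ∀ k, P.part (S.gen (S.target (b k))) = 2 → ∀ l, s' k = s' l → k = l)
    (hcol : s' ∘ σ = s')
    (hrepr : ∀ k, ∃ i,
      P.bas.repr (P.bas i * P.bas (S.gen (S.target (b (σ k))))) (S.image (b k)) ≠ 0) :
    wAct (S.probe b s s') σ = S.probe b s s' := by
  have hσodd : ∀ k, P.part (S.gen (S.target (b k))) = 2 → σ k = k := fun k hk =>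
    (hodd k hk _ (congrFun hcol k).symm).symm
  have hσeven : ∀ k, P.part (S.gen (S.target (b k))) ≠ 2 →
      P.part (S.gen (S.target (b (σ k)))) ≠ 2 := fun k hk h =>
    hk (by rwa [σ.injective (hσodd _ h)] at h)
  refine Prod.ext (funext fun k => ?_) (Prod.ext (funext fun k => ?_) hcol)
  all_goals by_cases hk : P.part (S.gen (S.target (b k))) = 2
  · exact congrArg (S.gen ∘ S.target ∘ b) (hσodd k hk)
  · refine congrArg S.gen (S.target_unique (b k) _ hk (hσeven k hk) ?_).symm
    simpa only [S.image_eq _ hk] using hrepr k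
  · exact congrArg s (hσodd k hk)
  · exact (heven _ (hσeven k hk)).symm.trans ((congrFun hcol k).trans (heven k hk))

theorem probe_isTriB (hodd : ∀ k, P.part (S.gen (S.target (b k))) = 2 → ∀ l, s' k = s' l → k = l) :
    IsTriB P (S.gen ∘ S.target ∘ b) s s' :=
  fun k l hkl heq hk => hkl (hodd k hk l (congrArg (fun t => t.2.2) heq))

variable [Nontrivial 𝕜]

variable [IsScalarTower 𝕜 (T d) (T d)]

theorem xiB_probe_mul_xiIdem (s s' : Fin d → Fin n) :
    xiB D ord (S.gen ∘ S.target ∘ b) s s' * xiIdem D e d =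
      xiB D ord (S.gen ∘ S.target ∘ b) s s' := by
  rw [D.xiB_eq_sum ord (S.probe b s s'), Finset.sum_mul]
  refine Finset.sum_congr rfl fun v hv => ?_
  obtain ⟨σ, -, rfl⟩ := mem_image.1 hv
  rw [smul_mul_assoc]
  congr 1
  have hbas : D.bas d (wAct (S.probe b s s') σ) * D.X (fun _ => e) (s' ∘ σ) (s' ∘ σ)
      = D.bas d (wAct (S.probe b s s') σ) := by
    refine (D.bas_mul_X_const S.idem_even _ _ _ _).trans ((D.bas_eq _ _ _ _).trans ?_).symm
    exact congrArg (D.X · _ _) (funext fun k => (S.mul_idem_of_mem _ (S.gen_mem _)).symm)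
  rw [← hbas, mul_assoc, D.X_const_mul_xiIdem S.idem_even S.idem]

theorem xiB_probe_mem_schurIdeal
    (hodd : ∀ k, P.part (S.gen (S.target (b k))) = 2 → ∀ l, s' k = s' l → k = l) :
    xiB D ord (S.gen ∘ S.target ∘ b) s s' ∈ D.schurIdeal ord e := by
  refine ⟨Submodule.subset_span ⟨_, s, s', S.probe_isTriB hodd, ?_⟩, S.xiB_probe_mul_xiIdem s s'⟩
  rw [eta, facSel_eq_one (w := S.probe b s s') fun k => S.gen_part _, one_smul]

variable [SMulCommClass 𝕜 (T d) (T d)]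

theorem detects_xiB_probe
    (heven : ∀ k, P.part (S.gen (S.target (b k))) ≠ 2 → s' k = s k)
    (hodd : ∀ k, P.part (S.gen (S.target (b k))) = 2 → ∀ l, s' k = s' l → k = l)
    (r : Fin d → Fin n) :
    Detects (D.bas d) (xiB D ord (S.gen ∘ S.target ∘ b) s s') (b, r, s) (S.image ∘ b, r, s') := by
  obtain ⟨c, hc⟩ := D.detects_bas (fun k => S.detects_gen (b k)) r s s'
  refine ⟨c, fun u => (hc u).symm ▸ ?_⟩
  rw [D.xiB_eq_sum ord (S.probe b s s'), Finset.mul_sum, map_sum, Finsupp.finsetSum_apply,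
    Finset.sum_eq_single_of_mem (S.probe b s s') (mem_image.2 ⟨1, mem_univ 1, rfl⟩),
    wordSign_mul_self, one_smul]
  · rfl
  intro v hv hne
  obtain ⟨σ, -, rfl⟩ := mem_image.1 hv
  suffices h : (D.bas d).repr (u * D.bas d (wAct (S.probe b s s') σ)) (S.image ∘ b, r, s') = 0 by
    rw [mul_smul_comm, Units.smul_def, map_smul, Finsupp.smul_apply, h, smul_zero]
  by_cases hcol : s' ∘ σ = s'
  · obtain ⟨k, hk⟩ := not_forall.1 fun h => hne (S.wAct_probe_eq_self heven hodd hcol h)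
    exact D.repr_mul_bas_eq_zero (k := k) (fun i => of_not_not (not_exists.1 hk i)) u
  · exact D.repr_mul_bas_eq_zero_of_ne hcol u

end Probe

variable [Nontrivial 𝕜] [IsScalarTower 𝕜 (T d) (T d)] [SMulCommClass 𝕜 (T d) (T d)]

theorem cFactor_dvd_repr (S : IntegralDetectingSystem P e κ) (hdn : d ≤ n) {u : T d}
    (hu : ∀ x ∈ D.schurIdeal ord e, u * x ∈ SchurT D ord d) (h2 : (2 : 𝕜) ∈ nonZeroDivisors 𝕜)
    (w : WordTriple β n d) : (cFactor P w : 𝕜) ∣ (D.bas d).repr u w := by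
  obtain ⟨b, r, s⟩ := w
  obtain ⟨s', heven, hodd⟩ :=
    exists_injOn_eqOn_compl hdn s {k | P.part (S.gen (S.target (b k))) = 2}
  obtain ⟨c, hc⟩ := S.detects_xiB_probe (D := D) (ord := ord) heven hodd r
  have hfactor : cFactor P (b, r, s) ∣ cFactor P (S.image ∘ b, r, s') :=
    facSel_dvd_facSel fun k hk => by
      have hk2 : P.part (S.gen (S.target (b k))) ≠ 2 := fun h => S.part_ne_one _ h hk
      exact congrArg₂ (·, r k, ·) (S.image_eq _ hk2).symm (heven k hk2).symm
  have hmem := hu _ (S.xiB_probe_mem_schurIdeal (b := b) (s := s) hodd)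
  have hdvd := ((D.mem_SchurT_iff ord h2).1 hmem).2 (S.image ∘ b, r, s')
  rw [hc, c.isUnit.dvd_mul_left] at hdvd
  exact (Nat.cast_dvd_cast hfactor).trans hdvd

theorem isDCI_SchurT [Finite κ] (S : IntegralDetectingSystem P e κ) (hdn : d ≤ n)
    (h2 : (2 : 𝕜) ∈ nonZeroDivisors 𝕜) : IsDCI 𝕜 (SchurT D ord d) (xiIdem D e d) := by
  have hω := Fin.castLE_injective hdn
  let St := S.tensor D S.idem_even (Fin.castLE hdn)
  refine ⟨fun x _ y _ h => sub_eq_zero.1 ?_, fun f hf => ?_⟩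
  · refine St.eq_zero_of_forall_mul_eq_zero h2 S.idem_even S.idem hω (ord := ord) fun z hz => ?_
    rw [sub_mul, h z hz, sub_self]
  · obtain ⟨u, huS, hu⟩ := St.exists_mem_SchurS_apply_eq_mul h2 S.idem_even S.idem hω hf
    refine ⟨u, (D.mem_SchurT_iff ord h2).2 ⟨huS, ?_⟩, hu⟩
    refine S.cFactor_dvd_repr (ord := ord) hdn (fun x hx => ?_) h2
    exact hu ⟨x, hx⟩ ▸ (f ⟨x, hx⟩).2.1

end IntegralDetectingSystem

end Integrality

section Zigzag

/-- The index set of the standard basis `{e_i} ∪ {c_j} ∪ {a_{j,j+1}} ∪ {a_{j+1,j}}` of the extended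
zigzag algebra. -/
abbrev ZigzagIndex (ℓ : ℕ) : Type := Fin (ℓ + 1) ⊕ (Fin ℓ ⊕ (Fin ℓ ⊕ Fin ℓ))

namespace ZigzagIndex

variable {ℓ : ℕ}

/-- The index of `e_i`. -/
abbrev vertex (i : Fin (ℓ + 1)) : ZigzagIndex ℓ := .inl i

/-- The index of `c_j`. -/
abbrev cycle (j : Fin ℓ) : ZigzagIndex ℓ := .inr (.inl j)

/-- The index of `a_{j,j+1}`. -/
abbrev down (j : Fin ℓ) : ZigzagIndex ℓ := .inr (.inr (.inl j))

/-- The index of `a_{j+1,j}`. -/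
abbrev up (j : Fin ℓ) : ZigzagIndex ℓ := .inr (.inr (.inr j))

/-- The vertex `i` with `e_i b = b`. -/
def leftVertex : ZigzagIndex ℓ → Fin (ℓ + 1)
  | .inl i => i
  | .inr (.inl j) => j.castSucc
  | .inr (.inr (.inl j)) => j.castSucc
  | .inr (.inr (.inr j)) => j.succ

/-- The vertex `i` with `b e_i = b`. -/
def rightVertex : ZigzagIndex ℓ → Fin (ℓ + 1)
  | .inl i => i
  | .inr (.inl j) => j.castSucc
  | .inr (.inr (.inl j)) => j.succ
  | .inr (.inr (.inr j)) => j.castSucc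

/-- The part of the good pair `(Z, 𝔷)` to which a standard basis element belongs: `0` for `𝔷`, `1`
for `𝔠` and `2` for the odd part. -/
def zigzagPart : ZigzagIndex ℓ → Fin 3 :=
  Sum.elim (fun _ => 0) (Sum.elim (fun _ => 1) fun _ => 2)

variable {m : ℕ} {b : ZigzagIndex (m + 1)}

theorem eq_of_leftVertex_eq_last (h : leftVertex b = Fin.last (m + 1)) :
    b = vertex (Fin.last (m + 1)) ∨ b = up (Fin.last m) := by
  rcases b with i | j | j | j
  · exact .inl (congrArg vertex h)
  · exact absurd h (Fin.castSucc_ne_last j)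
  · exact absurd h (Fin.castSucc_ne_last j)
  · exact .inr (congrArg up (Fin.succ_injective _ h))

theorem eq_of_rightVertex_eq_last (h : rightVertex b = Fin.last (m + 1)) :
    b = vertex (Fin.last (m + 1)) ∨ b = down (Fin.last m) := by
  rcases b with i | j | j | j
  · exact .inl (congrArg vertex h)
  · exact absurd h (Fin.castSucc_ne_last j)
  · exact .inr (congrArg down (Fin.succ_injective _ h))
  · exact absurd h (Fin.castSucc_ne_last j)

/-- The generators of the right `eZe`-module `Ze`: `e_j` for `j < ℓ`, and `a_{ℓ,ℓ-1}` for the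
missing vertex `j = ℓ`. -/
def generator (j : Fin (m + 2)) : ZigzagIndex (m + 1) :=
  if j = Fin.last (m + 1) then up (Fin.last m) else vertex j

theorem generator_last : generator (Fin.last (m + 1)) = up (Fin.last m) := if_pos rfl

theorem generator_of_ne {j : Fin (m + 2)} (hj : j ≠ Fin.last (m + 1)) : generator j = vertex j :=
  if_neg hj

theorem leftVertex_generator (j : Fin (m + 2)) : leftVertex (generator j) = j := by
  by_cases hj : j = Fin.last (m + 1)
  · rw [hj, generator_last]
    rfl
  · rw [generator_of_ne hj]
    rfl

theorem rightVertex_generator_ne_last (j : Fin (m + 2)) :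
    rightVertex (generator j) ≠ Fin.last (m + 1) := by
  by_cases hj : j = Fin.last (m + 1)
  · rw [hj, generator_last]
    exact Fin.castSucc_ne_last _
  · rwa [generator_of_ne hj]

/-- The index of `b * g`, for `g` the generator with left vertex `rightVertex b`. -/
def mulGenerator (b : ZigzagIndex (m + 1)) : ZigzagIndex (m + 1) :=
  if b = vertex (Fin.last (m + 1)) then up (Fin.last m)
  else if b = down (Fin.last m) then cycle (Fin.last m) else b

theorem mulGenerator_vertex_last :
    mulGenerator (vertex (Fin.last (m + 1))) = up (Fin.last m) := if_pos rfl

theorem mulGenerator_down_last : mulGenerator (down (Fin.last m)) = cycle (Fin.last m) :=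
  (if_neg nofun).trans (if_pos rfl)

theorem mulGenerator_of_ne (hb : rightVertex b ≠ Fin.last (m + 1)) : mulGenerator b = b := by
  rw [mulGenerator, if_neg, if_neg] <;> rintro rfl <;> exact hb rfl

theorem zigzagPart_generator_eq_two_iff {j : Fin (m + 2)} :
    zigzagPart (generator j) = 2 ↔ j = Fin.last (m + 1) := by
  by_cases hj : j = Fin.last (m + 1)
  · simp [hj, generator_last, zigzagPart]
  · simp [hj, generator_of_ne, zigzagPart]

end ZigzagIndex

open ZigzagIndex

variable {Z : Type} [NonUnitalRing Z] [Module 𝕜 Z]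

/-- `B` multiplies like the standard basis of the extended zigzag algebra, as far as right
multiplication by `e_i`, `c_j` and `a_{j+1,j}` is concerned. -/
structure IsZigzagBasis {ℓ : ℕ} (B : Module.Basis (ZigzagIndex ℓ) 𝕜 Z) : Prop where
  mul_vertex : ∀ b i, B b * B (vertex i) = if rightVertex b = i then B b else 0
  vertex_mul : ∀ b i, B (vertex i) * B b = if leftVertex b = i then B b else 0
  cycle_mul_cycle : ∀ j j', B (cycle j) * B (cycle j') = 0
  down_mul_cycle : ∀ j j', B (down j) * B (cycle j') = 0
  up_mul_cycle : ∀ j j', B (up j) * B (cycle j') = 0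
  cycle_mul_up : ∀ j j', B (cycle j) * B (up j') = 0
  down_mul_up : ∀ j j', B (down j) * B (up j') = if j = j' then B (cycle j) else 0

/-- The idempotent `e_0 + ⋯ + e_{ℓ-1}`. -/
def zigzagIdem {ℓ : ℕ} (B : Module.Basis (ZigzagIndex ℓ) 𝕜 Z) : Z :=
  ∑ j : Fin ℓ, B (vertex j.castSucc)

namespace IsZigzagBasis

section Table

variable {ℓ : ℕ} {B : Module.Basis (ZigzagIndex ℓ) 𝕜 Z}

theorem mul_cycle (hB : IsZigzagBasis B) (b : ZigzagIndex ℓ) (j : Fin ℓ) :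
    B b * B (cycle j) = if b = vertex j.castSucc then B (cycle j) else 0 := by
  rcases b with i | i | i | i
  · rw [hB.vertex_mul]
    exact if_congr (by simp [leftVertex, eq_comm]) rfl rfl
  · simpa using hB.cycle_mul_cycle i j
  · simpa using hB.down_mul_cycle i j
  · simpa using hB.up_mul_cycle i j

theorem mul_idem (hB : IsZigzagBasis B) (b : ZigzagIndex ℓ) :
    B b * zigzagIdem B = if rightVertex b = Fin.last ℓ then 0 else B b := by
  simp only [zigzagIdem, Finset.mul_sum, hB.mul_vertex]
  cases rightVertex b using Fin.lastCases with
  | last => simp [(Fin.castSucc_ne_last _).symm]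
  | cast i => simp [Fin.castSucc_ne_last]

theorem idem_mul (hB : IsZigzagBasis B) (b : ZigzagIndex ℓ) :
    zigzagIdem B * B b = if leftVertex b = Fin.last ℓ then 0 else B b := by
  simp only [zigzagIdem, Finset.sum_mul, hB.vertex_mul]
  cases leftVertex b using Fin.lastCases with
  | last => simp [(Fin.castSucc_ne_last _).symm]
  | cast i => simp [Fin.castSucc_ne_last]

theorem isIdempotentElem_idem (hB : IsZigzagBasis B) : IsIdempotentElem (zigzagIdem B) := by
  refine (Finset.sum_mul _ _ _).trans ?_
  exact Finset.sum_congr rfl fun j _ => (hB.mul_idem _).trans (if_neg (Fin.castSucc_ne_last j))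

theorem idem_mul_mul_idem (hB : IsZigzagBasis B) {b : ZigzagIndex ℓ}
    (hl : leftVertex b ≠ Fin.last ℓ) (hr : rightVertex b ≠ Fin.last ℓ) :
    zigzagIdem B * B b * zigzagIdem B = B b := by
  rw [hB.idem_mul, if_neg hl, hB.mul_idem, if_neg hr]

variable [IsScalarTower 𝕜 Z Z]

theorem detects_vertex (hB : IsZigzagBasis B) (b : ZigzagIndex ℓ) :
    Detects B (B (vertex (rightVertex b))) b b := by
  refine .of_repr_basis_mul 1 fun k => ?_
  by_cases hk : k = b
  · simp [hB.mul_vertex, hk]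
  · rw [hB.mul_vertex]
    split_ifs <;> simp [hk]

theorem detects_cycle (hB : IsZigzagBasis B) (j : Fin ℓ) :
    Detects B (B (cycle j)) (vertex j.castSucc) (cycle j) :=
  .of_repr_basis_mul 1 fun k => by
    rw [hB.mul_cycle]
    split_ifs <;> simp

variable [SMulCommClass 𝕜 Z Z]

theorem vertex_mul_mul_vertex_eq_zero (hB : IsZigzagBasis B) {i j : Fin (ℓ + 1)}
    (hij : ∀ b : ZigzagIndex ℓ, leftVertex b = i → rightVertex b ≠ j) (x : Z) :
    B (vertex i) * x * B (vertex j) = 0 := by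
  rw [← B.sum_repr x, Finset.mul_sum, Finset.sum_mul]
  refine Finset.sum_eq_zero fun b _ => ?_
  rw [mul_smul_comm, smul_mul_assoc, hB.vertex_mul]
  split_ifs with hb
  · rw [hB.mul_vertex, if_neg (hij b hb), smul_zero]
  · rw [zero_mul, smul_zero]

theorem up_mul_up (hB : IsZigzagBasis B) (i j : Fin ℓ) : B (up i) * B (up j) = 0 := by
  have hi : B (vertex i.succ) * B (up i) = B (up i) := (hB.vertex_mul _ _).trans (if_pos rfl)
  have hj : B (up j) * B (vertex j.castSucc) = B (up j) := (hB.mul_vertex _ _).trans (if_pos rfl)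
  by_cases hij : i.castSucc = j.succ
  · rw [← hi, ← hj, ← mul_assoc, mul_assoc (B (vertex _))]
    refine hB.vertex_mul_mul_vertex_eq_zero (fun b hl hr => ?_) _
    rcases b with k | k | k | k <;> simp only [leftVertex, rightVertex, Fin.ext_iff,
      Fin.val_succ, Fin.val_castSucc] at hij hl hr <;> omega
  · have hmid : B (up i) * B (vertex i.castSucc) = B (up i) :=
      (hB.mul_vertex _ _).trans (if_pos rfl)
    rw [← hmid, mul_assoc, hB.vertex_mul, if_neg fun h => hij h.symm, mul_zero]

theorem mul_up (hB : IsZigzagBasis B) (b : ZigzagIndex ℓ) (j : Fin ℓ) :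
    B b * B (up j) =
      if b = vertex j.succ then B (up j) else if b = down j then B (cycle j) else 0 := by
  rcases b with i | i | i | i
  · simp [hB.vertex_mul, leftVertex, eq_comm]
  · simp [hB.cycle_mul_up]
  · by_cases h : i = j <;> simp [hB.down_mul_up, h]
  · simp [hB.up_mul_up]

theorem detects_up_vertex (hB : IsZigzagBasis B) (j : Fin ℓ) :
    Detects B (B (up j)) (vertex j.succ) (up j) :=
  .of_repr_basis_mul 1 fun k => by
    rw [hB.mul_up]
    split_ifs <;> simp_all

theorem detects_up_down (hB : IsZigzagBasis B) (j : Fin ℓ) :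
    Detects B (B (up j)) (down j) (cycle j) :=
  .of_repr_basis_mul 1 fun k => by
    rw [hB.mul_up]
    split_ifs <;> simp_all

end Table

variable {m : ℕ} {B : Module.Basis (ZigzagIndex (m + 1)) 𝕜 Z} {b : ZigzagIndex (m + 1)}

theorem generator_mul_corner (hB : IsZigzagBasis B) (hb : rightVertex b ≠ Fin.last (m + 1)) :
    ∃ j z, zigzagIdem B * B z * zigzagIdem B = B z ∧ B (generator j) * B z = B b := by
  by_cases hl : leftVertex b = Fin.last (m + 1)
  · obtain rfl | rfl := eq_of_leftVertex_eq_last hl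
    · exact absurd rfl hb
    · refine ⟨Fin.last (m + 1), vertex (Fin.last m).castSucc, hB.idem_mul_mul_idem hb hb, ?_⟩
      rw [generator_last, hB.mul_vertex]
      exact if_pos rfl
  · exact ⟨leftVertex b, b, hB.idem_mul_mul_idem hl hb, by
      rw [generator_of_ne hl, hB.vertex_mul, if_pos rfl]⟩

variable [IsScalarTower 𝕜 Z Z]

theorem exists_corner_detects_of_ne (hB : IsZigzagBasis B) (hb : rightVertex b ≠ Fin.last (m + 1))
    {g : ZigzagIndex (m + 1)} (hg : rightVertex g ≠ rightVertex b) :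
    ∃ z i, zigzagIdem B * B z * zigzagIdem B = B z ∧ B g * B z = 0 ∧ Detects B (B z) b i :=
  ⟨vertex (rightVertex b), b, hB.idem_mul_mul_idem hb hb, by rw [hB.mul_vertex, if_neg hg],
    hB.detects_vertex b⟩

variable [SMulCommClass 𝕜 Z Z]

theorem exists_mul_up_last_eq_or_corner_detects (hB : IsZigzagBasis B)
    (hb : rightVertex b ≠ Fin.last (m + 1)) :
    (∃ a, B a * B (up (Fin.last m)) = B b) ∨
      ∃ z i, zigzagIdem B * B z * zigzagIdem B = B z ∧ B (up (Fin.last m)) * B z = 0 ∧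
        Detects B (B z) b i := by
  by_cases hg : (Fin.last m).castSucc = rightVertex b
  swap
  · exact .inr (hB.exists_corner_detects_of_ne hb hg)
  rcases b with i | j | j | j
  · obtain rfl : _ = i := hg
    exact .inr ⟨cycle (Fin.last m), _, hB.idem_mul_mul_idem hb hb, hB.up_mul_cycle _ _,
      hB.detects_cycle _⟩
  · obtain rfl := Fin.castSucc_injective _ hg
    exact .inl ⟨down (Fin.last m), (hB.down_mul_up _ _).trans (if_pos rfl)⟩
  · exact .inr ⟨up j, _, hB.idem_mul_mul_idem hb (Fin.castSucc_ne_last j), hB.up_mul_up _ _,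
      hB.detects_up_down j⟩
  · obtain rfl := Fin.castSucc_injective _ hg
    exact .inl ⟨vertex (Fin.last (m + 1)), (hB.vertex_mul _ _).trans (if_pos rfl)⟩

theorem exists_mul_generator_eq_or_corner_detects (hB : IsZigzagBasis B)
    (hb : rightVertex b ≠ Fin.last (m + 1)) (j : Fin (m + 2)) :
    (∃ a, B a * B (generator j) = B b) ∨
      ∃ z i, zigzagIdem B * B z * zigzagIdem B = B z ∧ B (generator j) * B z = 0 ∧
        Detects B (B z) b i := by
  by_cases hj : j = Fin.last (m + 1)
  · rw [hj, generator_last]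
    exact hB.exists_mul_up_last_eq_or_corner_detects hb
  rw [generator_of_ne hj]
  by_cases hbj : rightVertex b = j
  · exact .inl ⟨b, (hB.mul_vertex _ _).trans (if_pos hbj)⟩
  · exact .inr (hB.exists_corner_detects_of_ne hb (Ne.symm hbj))

theorem detects_generator (hB : IsZigzagBasis B) (b : ZigzagIndex (m + 1)) :
    Detects B (B (generator (rightVertex b))) b (mulGenerator b) := by
  by_cases hb : rightVertex b = Fin.last (m + 1)
  · rw [hb, generator_last]
    obtain rfl | rfl := eq_of_rightVertex_eq_last hb
    · exact mulGenerator_vertex_last (m := m) ▸ hB.detects_up_vertex (Fin.last m)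
    · exact mulGenerator_down_last (m := m) ▸ hB.detects_up_down (Fin.last m)
  · rw [generator_of_ne hb, mulGenerator_of_ne hb]
    exact hB.detects_vertex b

/-- The certificate that `e_0 + ⋯ + e_{ℓ-1}` is a double centralizer idempotent for the extended
zigzag algebra. -/
def detectingSystem (hB : IsZigzagBasis B) :
    DetectingSystem B (zigzagIdem B) (Fin (m + 2)) where
  right := {b | rightVertex b ≠ Fin.last (m + 1)}
  gen := generator
  proj := vertex
  target := rightVertex
  image := mulGenerator
  idem := hB.isIdempotentElem_idem
  mul_idem_of_mem b hb := (hB.mul_idem b).trans (if_neg hb)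
  mul_idem_of_notMem b hb := (hB.mul_idem b).trans (if_pos (of_not_not hb))
  gen_mem := rightVertex_generator_ne_last
  proj_mul_gen j := by
    rw [hB.vertex_mul, if_pos (leftVertex_generator j)]
    exact MulAction.mem_orbit_self _
  proj_mul_gen_of_ne j j' hne := by
    rw [hB.vertex_mul, leftVertex_generator, if_neg hne.symm]
  spans b hb := by
    obtain ⟨j, z, hz, hjz⟩ := hB.generator_mul_corner hb
    exact ⟨j, z, hz, hjz ▸ MulAction.mem_orbit_self _⟩
  lifts b hb j :=
    (hB.exists_mul_generator_eq_or_corner_detects hb j).imp_left fun ⟨a, ha⟩ =>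
      ⟨a, ha ▸ MulAction.mem_orbit_self _⟩
  detects_corner b hb :=
    ⟨vertex (rightVertex b), b, hB.idem_mul_mul_idem hb hb, hB.detects_vertex b⟩
  detects_gen := hB.detects_generator

/-- The detecting system of the extended zigzag algebra is compatible with the good pair
`(Z, 𝔷)`. -/
def integralDetectingSystem {P : GoodPair 𝕜 Z (ZigzagIndex (m + 1))} (hB : IsZigzagBasis P.bas)
    (hpart : ∀ b, P.part b = zigzagPart b) :
    IntegralDetectingSystem P (zigzagIdem P.bas) (Fin (m + 2)) where
  toDetectingSystem := hB.detectingSystem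
  idem_even := Submodule.sum_mem _ fun j _ => P.bas_mem_ev (by simp [hpart, zigzagPart])
  gen_part j := by
    change P.part (generator j) ≠ 1
    rw [hpart, generator]
    split_ifs <;> simp [zigzagPart]
  image_eq b hb := mulGenerator_of_ne fun h => hb <|
    (hpart _).trans (zigzagPart_generator_eq_two_iff.2 h)
  target_unique b j _ hj := by
    rintro ⟨a, ha⟩
    change P.part (generator j) ≠ 2 at hj
    change P.bas.repr (P.bas a * P.bas (generator j)) b ≠ 0 at ha
    change rightVertex b = j
    rw [hpart, Ne, zigzagPart_generator_eq_two_iff] at hj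
    rw [generator_of_ne hj, hB.mul_vertex] at ha
    split_ifs at ha with haj
    · rw [P.bas.repr_self, Finsupp.single_apply_ne_zero] at ha
      rw [ha.1, haj]
    · simp at ha
  part_ne_one b hb := by
    change P.part (generator (rightVertex b)) = 2 at hb
    rw [hpart, zigzagPart_generator_eq_two_iff] at hb
    obtain rfl | rfl := eq_of_rightVertex_eq_last hb <;> simp [hpart, zigzagPart]

end IsZigzagBasis

end Zigzag

open ZigzagIndex in
theorem statement19_general {𝕜 Z : Type} [CommRing 𝕜] [Nontrivial 𝕜] [Ring Z] [Algebra 𝕜 Z]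
    (h2 : (2 : 𝕜) ∈ nonZeroDivisors 𝕜) (ℓ : ℕ) (hℓ : 1 ≤ ℓ)
    (eI : Fin (ℓ + 1) → Z) (cC aD aU : Fin ℓ → Z)
    (hee : ∀ i j, eI i * eI j = if i = j then eI i else 0)
    (heD : ∀ i j, eI i * aD j = if i = Fin.castSucc j then aD j else 0)
    (hDe : ∀ i j, aD j * eI i = if i = Fin.succ j then aD j else 0)
    (heU : ∀ i j, eI i * aU j = if i = Fin.succ j then aU j else 0)
    (hUe : ∀ i j, aU j * eI i = if i = Fin.castSucc j then aU j else 0)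
    (hec : ∀ i j, eI i * cC j = if i = Fin.castSucc j then cC j else 0)
    (hce : ∀ i j, cC j * eI i = if i = Fin.castSucc j then cC j else 0)
    (hDU : ∀ j j', aD j * aU j' = if j = j' then cC j else 0)
    (hccc : ∀ i j, cC i * cC j = 0) (hdc : ∀ i j, aD j * cC i = 0)
    (hcu : ∀ i j, cC i * aU j = 0) (huc : ∀ i j, aU j * cC i = 0)
    (P : GoodPair 𝕜 Z (ZigzagIndex ℓ))
    (hPbas : ∀ g, P.bas g = Sum.elim eI (Sum.elim cC (Sum.elim aD aU)) g)
    (hPpart : ∀ g, P.part g = zigzagPart g)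
    {n : ℕ} {T : ℕ → Type} [∀ e, Ring (T e)] [∀ e, Algebra 𝕜 (T e)]
    (D : Tower 𝕜 Z (ZigzagIndex ℓ) n T P)
    (ord : LinearOrder (Z × Fin n × Fin n)) (d : ℕ) :
    IsDCI 𝕜 (⊤ : Submodule 𝕜 Z) (∑ j : Fin ℓ, eI (Fin.castSucc j)) ∧
    (d ≤ n → IsDCI 𝕜 (SchurT D ord d) (xiIdem D (∑ j : Fin ℓ, eI (Fin.castSucc j)) d)) := by
  obtain ⟨m, rfl⟩ := Nat.exists_eq_add_of_le' hℓ
  have hB : IsZigzagBasis P.bas :=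
    { mul_vertex := by
        rintro (i | i | i | i) j <;> simp [hPbas, hee, hce, hDe, hUe, rightVertex, eq_comm]
      vertex_mul := by
        rintro (i | i | i | i) j <;> grind [leftVertex]
      cycle_mul_cycle := by simp [hPbas, hccc]
      down_mul_cycle := by simp [hPbas, hdc]
      up_mul_cycle := by simp [hPbas, huc]
      cycle_mul_up := by simp [hPbas, hcu]
      down_mul_up := by simp [hPbas, hDU] }
  have hidem : zigzagIdem P.bas = ∑ j, eI (Fin.castSucc j) := by simp [zigzagIdem, hPbas]
  rw [← hidem]
  exact ⟨hB.detectingSystem.isDCI_top,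
    fun hdn => (hB.integralDetectingSystem hPpart).isDCI_SchurT hdn h2⟩

/-- Let `𝕜` be a PID of characteristic `0` and `Z` the extended zigzag
algebra for `ℓ ≥ 1` (axiomatized by its standard basis
`{e_i} ∪ {c_j} ∪ {a_{j,j+1}} ∪ {a_{j+1,j}}` and the defining multiplication table), with the
unital good pair `(Z,𝔷)`, `𝔷 = span(e_0,…,e_ℓ)`.  Let `e := e_0 + ⋯ + e_{ℓ−1}` (so that
`eZe = Z̄` is the zigzag algebra and `ξ^e·T^Z_𝔷(n,d)·ξ^e = T^{Z̄}_{𝔷̄}(n,d)`).  Then: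
(1) `e` is a double centralizer idempotent for `Z`; and (2) if `d ≤ n` then `ξ^e` is a
double centralizer idempotent for `T^Z_𝔷(n,d)`. -/
theorem statement19 {𝕜 Z : Type} [CommRing 𝕜] [IsDomain 𝕜] [IsPrincipalIdealRing 𝕜]
    [CharZero 𝕜] [Ring Z] [Algebra 𝕜 Z]
    (ℓ : ℕ) (hℓ : 1 ≤ ℓ)
    (eI : Fin (ℓ + 1) → Z) (cC aD aU : Fin ℓ → Z)
    -- the defining relations of the extended zigzag algebra
    (hsum : ∑ i, eI i = 1)
    (hee : ∀ i j, eI i * eI j = if i = j then eI i else 0)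
    (heD : ∀ (i : Fin (ℓ + 1)) (j : Fin ℓ), eI i * aD j = if i = Fin.castSucc j then aD j else 0)
    (hDe : ∀ (i : Fin (ℓ + 1)) (j : Fin ℓ), aD j * eI i = if i = Fin.succ j then aD j else 0)
    (heU : ∀ (i : Fin (ℓ + 1)) (j : Fin ℓ), eI i * aU j = if i = Fin.succ j then aU j else 0)
    (hUe : ∀ (i : Fin (ℓ + 1)) (j : Fin ℓ), aU j * eI i = if i = Fin.castSucc j then aU j else 0)
    (hec : ∀ (i : Fin (ℓ + 1)) (j : Fin ℓ), eI i * cC j = if i = Fin.castSucc j then cC j else 0)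
    (hce : ∀ (i : Fin (ℓ + 1)) (j : Fin ℓ), cC j * eI i = if i = Fin.castSucc j then cC j else 0)
    (hDU : ∀ j j' : Fin ℓ, aD j * aU j' = if j = j' then cC j else 0)
    (hUD : ∀ j j' : Fin ℓ, aU j * aD j'
      = if j = j' then (if h : (j : ℕ) + 1 < ℓ then cC ⟨(j : ℕ) + 1, h⟩ else 0) else 0)
    (hccc : ∀ i j : Fin ℓ, cC i * cC j = 0)
    (hcd : ∀ i j : Fin ℓ, cC i * aD j = 0) (hdc : ∀ i j : Fin ℓ, aD j * cC i = 0)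
    (hcu : ∀ i j : Fin ℓ, cC i * aU j = 0) (huc : ∀ i j : Fin ℓ, aU j * cC i = 0)
    -- the good pair `(Z, 𝔷)` with its standard basis and partition
    (P : GoodPair 𝕜 Z (Fin (ℓ + 1) ⊕ (Fin ℓ ⊕ (Fin ℓ ⊕ Fin ℓ))))
    (hPbas : ∀ g, P.bas g = Sum.elim eI (Sum.elim cC (Sum.elim aD aU)) g)
    (hPpart : ∀ g, P.part g
      = Sum.elim (fun _ => (0 : Fin 3)) (Sum.elim (fun _ => 1) (fun _ => 2)) g)
    (hPaa : P.aa = Submodule.span 𝕜 (Set.range eI))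
    (hPev : P.ev = Submodule.span 𝕜 (Set.range eI ∪ Set.range cC))
    (hPod : P.od = Submodule.span 𝕜 (Set.range aD ∪ Set.range aU))
    {n : ℕ} (hn : 0 < n) {T : ℕ → Type} [∀ e, Ring (T e)] [∀ e, Algebra 𝕜 (T e)]
    (D : Tower 𝕜 Z (Fin (ℓ + 1) ⊕ (Fin ℓ ⊕ (Fin ℓ ⊕ Fin ℓ))) n T P)
    (ord : LinearOrder (Z × Fin n × Fin n)) (d : ℕ) :
    IsDCI 𝕜 (⊤ : Submodule 𝕜 Z) (∑ j : Fin ℓ, eI (Fin.castSucc j)) ∧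
    (d ≤ n → IsDCI 𝕜 (SchurT D ord d) (xiIdem D (∑ j : Fin ℓ, eI (Fin.castSucc j)) d)) := by
  exact statement19_general (mem_nonZeroDivisors_of_ne_zero two_ne_zero) ℓ hℓ eI cC aD aU
    hee heD hDe heU hUe hec hce hDU hccc hdc hcu huc P hPbas hPpart D ord d

end GS
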